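/- arXiv:1804.02548 — 2 statements merged into one kernel-verified Lean document; each statement's English description precedes it below -/
import Mathlib

section
/- For all integers p, q with 1 ≤ p < q and every function f ∈ 𝔉 with f ≺ 𝔦 (where 𝔦(n) = n), the Baumslag–Solitar group BS(p,q) = ⟨a, t | t a^p t⁻¹ = a^q⟩ does not belong to the class ℬ_f. -/
namespace CAG

/-- The convolution `w₁ ⊗ w₂` of two words, over the padded alphabet
`(Σ ∪ {⋄})²`, modelled as `Option α × Option α` where `none` is the padding symbol `⋄`. -/
def conv {α : Type*} : List α → List α → List (Option α × Option α)
  | [], [] => []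
  | a :: as, [] => (some a, none) :: conv as []
  | [], b :: bs => (none, some b) :: conv [] bs
  | a :: as, b :: bs => (some a, some b) :: conv as bs

/-- A binary relation on words is regular if the language of convolutions of its pairs
is a regular language. -/
def IsRegularRel {α : Type*} (R : Set (List α × List α)) : Prop :=
  Language.IsRegular {w | ∃ p ∈ R, w = conv p.1 p.2}

variable {G : Type*} [Group G]

/-- The alphabet `S = A ∪ A⁻¹` associated to a generating set `A ⊆ G`. -/
def Alph (A : Set G) : Type _ := {x : G // x ∈ A ∪ A⁻¹}

/-- The canonical evaluation map `π : S* → G`. -/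
def eval (A : Set G) (w : List (Alph A)) : G := (w.map Subtype.val).prod

/-- The word length `d_A(g)` of `g` with respect to the generating set `A`. -/
noncomputable def wordLength (A : Set G) (g : G) : ℕ :=
  sInf {n | ∃ w : List (Alph A), eval A w = g ∧ w.length = n}

/-- The distance `d_A(g₁, g₂)` in the Cayley graph of `G` with respect to `A`. -/
noncomputable def cayleyDist (A : Set G) (g₁ g₂ : G) : ℕ := wordLength A (g₁⁻¹ * g₂)

/-- `ψ : L → G` is a Cayley automatic representation of `G` (w.r.t. the
generating set `A`): `L ⊆ S*` is regular, `ψ` is a bijection from `L` onto `G`, and for every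
`a ∈ A` the relation `R_a = {(ψ⁻¹(g), ψ⁻¹(g·a)) : g ∈ G}` is regular. -/
def IsCayleyAutomaticRep (A : Set G) (L : Language (Alph A)) (ψ : List (Alph A) → G) : Prop :=
  Language.IsRegular L ∧ Set.BijOn ψ L Set.univ ∧
    ∀ a ∈ A, IsRegularRel {p : List (Alph A) × List (Alph A) |
      p.1 ∈ L ∧ p.2 ∈ L ∧ ψ p.2 = ψ p.1 * a}

/-- `G` is Cayley automatic with respect to the generating set `A`. -/
def IsCayleyAutomatic (A : Set G) : Prop :=
  ∃ (L : Language (Alph A)) (ψ : List (Alph A) → G), IsCayleyAutomaticRep A L ψ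

/-- `G` is automatic (in the sense of Thurston) with respect to the generating set `A`:
there is a regular language `L ⊆ S*` on which the canonical evaluation map `π` is a bijection
onto `G` and all the relations `R_a`, `a ∈ A`, are regular. -/
def IsAutomatic (A : Set G) : Prop :=
  ∃ L : Language (Alph A), IsCayleyAutomaticRep A L (eval A)

/-- The family `𝔉` of non-decreasing, non-negative real valued functions defined on a
final segment `[Q, ∞)` of `ℕ` (values below `Q` are irrelevant junk values). -/
structure FFun where
  Q : ℕ
  toFun : ℕ → ℝ
  nonneg : ∀ n, Q ≤ n → 0 ≤ toFun n
  mono : ∀ m n, Q ≤ m → m ≤ n → toFun m ≤ toFun n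

/-- `h ⪯ f` : there are positive integers `K, M, N`, with `[N,∞)` contained in the domains of
`h` and `f`, such that `h(n) ≤ K·f(M·n)` for all `n ≥ N`. -/
def FFun.Preceq (h f : FFun) : Prop :=
  ∃ K M N : ℕ, 0 < K ∧ 0 < M ∧ 0 < N ∧ h.Q ≤ N ∧ f.Q ≤ N ∧
    ∀ n, N ≤ n → h.toFun n ≤ K * f.toFun (M * n)

/-- `h ≍ f` iff `h ⪯ f` and `f ⪯ h`. -/
def FFun.Equiv (h f : FFun) : Prop := h.Preceq f ∧ f.Preceq h

/-- `h ≺ f` iff `h ⪯ f` and not `h ≍ f`. -/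
def FFun.Prec (h f : FFun) : Prop := h.Preceq f ∧ ¬ h.Equiv f

/-- `G ∈ ℬ_f` with respect to the generating set `A`: there is a Cayley automatic
representation `ψ : L → G` such that the function
`h(n) = max{d_A(π(w), ψ(w)) : w ∈ L, |w| ≤ n}` satisfies `h ⪯ f`
(stated equivalently: for some positive `K, M, N` with `N ≥ Q_f`, every `w ∈ L` with `|w| ≤ n`
and `n ≥ N` satisfies `d_A(π(w), ψ(w)) ≤ K·f(M·n)`). -/
def InB (A : Set G) (f : FFun) : Prop :=
  ∃ (L : Language (Alph A)) (ψ : List (Alph A) → G),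
    IsCayleyAutomaticRep A L ψ ∧
    ∃ K M N : ℕ, 0 < K ∧ 0 < M ∧ 0 < N ∧ f.Q ≤ N ∧
      ∀ n, N ≤ n → ∀ w ∈ L, w.length ≤ n →
        (cayleyDist A (eval A w) (ψ w) : ℝ) ≤ K * f.toFun (M * n)

/-- The identity function `𝔦(n) = n` as an element of `𝔉`. -/
def identF : FFun where
  Q := 1
  toFun n := n
  nonneg n _ := by positivity
  mono m n _ h := by simpa using (Nat.cast_le (α := ℝ)).mpr h

/-- The exponential function `𝔢(n) = exp n` as an element of `𝔉`. -/
noncomputable def expF : FFun where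
  Q := 1
  toFun n := Real.exp n
  nonneg n _ := (Real.exp_pos n).le
  mono m n _ h := Real.exp_le_exp.mpr (by exact_mod_cast h)

end CAG
namespace CAG

/-- The defining relation of the Baumslag–Solitar group `BS(p,q) = ⟨a,t | t aᵖ t⁻¹ = a^q⟩`,
with `a` the generator `0` and `t` the generator `1` of the free group on two generators. -/
def BSRels (p q : ℕ) : Set (FreeGroup (Fin 2)) :=
  {FreeGroup.of 1 * FreeGroup.of 0 ^ p * (FreeGroup.of 1)⁻¹ * (FreeGroup.of 0 ^ q)⁻¹}

/-- The Baumslag–Solitar group `BS(p,q) = ⟨a,t | t aᵖ t⁻¹ = a^q⟩`. -/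
abbrev BS (p q : ℕ) := PresentedGroup (BSRels p q)

/-- The generator `a` of `BS(p,q)`. -/
def BS.a (p q : ℕ) : BS p q := PresentedGroup.of 0

/-- The generator `t` of `BS(p,q)`. -/
def BS.t (p q : ℕ) : BS p q := PresentedGroup.of 1

/-- The alphabet of blocks `{t, at, …, a^{q-1}t, t⁻¹, at⁻¹, …, a^{p-1}t⁻¹}`:
`.inl i` stands for `aⁱt` (`0 ≤ i < q`) and `.inr j` stands for `aʲt⁻¹` (`0 ≤ j < p`). -/
abbrev BSBlock (p q : ℕ) := Fin q ⊕ Fin p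

/-- The word in the letters `a, t` (elements of `Fin 2 × Bool`, the letter `(x, b)` standing
for `x` if `b = true` and `x⁻¹` if `b = false`) spelled by a single block. -/
def BSBlock.letters {p q : ℕ} : BSBlock p q → List (Fin 2 × Bool)
  | .inl i => List.replicate i.val ((0 : Fin 2), true) ++ [((1 : Fin 2), true)]
  | .inr j => List.replicate j.val ((0 : Fin 2), true) ++ [((1 : Fin 2), false)]

/-- The word in the letters `a, t` spelled by a sequence of blocks. -/
def BSBlockWord {p q : ℕ} (bs : List (BSBlock p q)) : List (Fin 2 × Bool) :=
  (bs.map BSBlock.letters).flatten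

/-- A sequence of blocks is freely reduced if the word in `a, t` it spells is freely
reduced, i.e. it contains no subword `x x⁻¹` or `x⁻¹ x`. -/
def BSFreelyReduced {p q : ℕ} (bs : List (BSBlock p q)) : Prop :=
  FreeGroup.reduce (BSBlockWord bs) = BSBlockWord bs

/-- The element of `BS(p,q)` represented by a single block. -/
def BSBlock.elem {p q : ℕ} : BSBlock p q → BS p q
  | .inl i => BS.a p q ^ i.val * BS.t p q
  | .inr j => BS.a p q ^ j.val * (BS.t p q)⁻¹

end CAG

/-!
Suppose that a Cayley automatic representation moves words of length at most `n` by at most `h`.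
Prefixes of equal length of two representatives of neighbouring elements can be completed, by
boundedly many letters, to representatives of neighbouring elements again. The paths labelled by
the two representatives therefore stay at distance `O(h)`, and the strip between them is cut into
about `n` loops of length `O(h)`. Strips fill every loop of length `l` whose vertices have
representatives of length at most `n`, which holds as soon as `n` exceeds a multiple of `l`. Hence
a 1-form with integrals at most `b` round loops of length `O(h)` has integral at most
`l * (n + 2) * b` round a loop of length `l`.

On `BS(p,q)` we integrate `x dy`, where `x` is the horizontal position and `y` counts the
crossings of the `t`-edges that start at level `0` with `x ∈ qℤ`. Round a loop of length `m` the
integral is at most `m² (q/p)^m`. On the other hand `a ^ N`, for suitable multiples `N ≥ (q/p)^i` of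
`q`, is spelled by a word `u` of length `O(i)` which meets level `0` only in its end edges. Among
the `t`-edges that start at `1`, `a`, `a ^ N` and `a ^ (N + 1)` the first and third are counted, so
the integrals along `a u` and `u a` differ by `N`. Taking `l`, `n` and `i` proportional to `k`, this
forces `h` to grow at least linearly.
-/

namespace CAG

section RegularRelations

open scoped List

variable {α : Type*}

lemma filterMap_fst_conv (u v : List α) : (conv u v).filterMap Prod.fst = u := by
  fun_induction conv u v <;> simp [*]

lemma filterMap_snd_conv (u v : List α) : (conv u v).filterMap Prod.snd = v := by
  fun_induction conv u v <;> simp [*]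

lemma take_conv (u v : List α) (k : ℕ) :
    (conv u v).take k = conv (u.take k) (v.take k) := by
  induction k generalizing u v with
  | zero => simp [conv]
  | succ k ih => cases u <;> cases v <;> simp [conv, ih]

lemma drop_conv (u v : List α) (k : ℕ) :
    (conv u v).drop k = conv (u.drop k) (v.drop k) := by
  induction k generalizing u v with
  | zero => simp
  | succ k ih => cases u <;> cases v <;> simp [conv, ih]

lemma exists_sublist_evalFrom_eq {σ : Type*} [Fintype σ] (M : DFA α σ) (s : σ) (x : List α) :
    ∃ z : List α, z <+ x ∧ z.length ≤ Fintype.card σ ∧ M.evalFrom s z = M.evalFrom s x := by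
  induction hn : x.length using Nat.strong_induction_on generalizing x with
  | _ n ih =>
    by_cases hle : x.length ≤ Fintype.card σ
    · exact ⟨x, .refl x, hle, rfl⟩
    obtain ⟨s', a, b, c, rfl, -, hb, ha, -, hc⟩ := M.evalFrom_split (x := x) (s := s) (by omega) rfl
    have hlt : (a ++ c).length < n := by
      have := List.length_pos_of_ne_nil hb
      simp only [List.length_append] at hn ⊢
      omega
    obtain ⟨z, hz, hzlen, hzeval⟩ := ih _ hlt _ rfl
    refine ⟨z, hz.trans ?_, hzlen, ?_⟩
    · exact (List.sublist_append_left a b).append (.refl c)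
    · rw [hzeval, ← hc, DFA.evalFrom_of_append, ha]

/-- `C` is a completion constant for the relation `R` on words: truncating both words of a pair
in `R` at the same position, one returns to `R` by appending words of length at most `C`. The
appended words are moreover obtained from the removed ones by deleting letters. -/
def HasCompletions (R : Set (List α × List α)) (C : ℕ) : Prop :=
  ∀ u v, (u, v) ∈ R → ∀ k, ∃ z₁ z₂, z₁ <+ u.drop k ∧ z₂ <+ v.drop k ∧ z₁.length ≤ C ∧
    z₂.length ≤ C ∧ (u.take k ++ z₁, v.take k ++ z₂) ∈ R

lemma IsRegularRel.exists_hasCompletions {R : Set (List α × List α)} (hR : IsRegularRel R) :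
    ∃ C, HasCompletions R C := by
  obtain ⟨σ, _, M, hM⟩ := hR
  have mem_accepts (w) : w ∈ M.accepts ↔ ∃ p ∈ R, w = conv p.1 p.2 := by rw [hM]; rfl
  refine ⟨Fintype.card σ, fun u v huv k => ?_⟩
  obtain ⟨z, hz, hzlen, hzeval⟩ :=
    exists_sublist_evalFrom_eq M (M.evalFrom M.start ((conv u v).take k)) ((conv u v).drop k)
  have hacc : (conv u v).take k ++ z ∈ M.accepts := by
    rw [DFA.mem_accepts, DFA.eval, DFA.evalFrom_of_append, hzeval, ← DFA.evalFrom_of_append,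
      List.take_append_drop]
    exact (mem_accepts _).2 ⟨_, huv, rfl⟩
  obtain ⟨⟨u', v'⟩, hR', hconv⟩ := (mem_accepts _).1 hacc
  have hu' : u.take k ++ z.filterMap Prod.fst = u' := by
    simpa only [List.filterMap_append, take_conv, filterMap_fst_conv] using
      congrArg (List.filterMap Prod.fst) hconv
  have hv' : v.take k ++ z.filterMap Prod.snd = v' := by
    simpa only [List.filterMap_append, take_conv, filterMap_snd_conv] using
      congrArg (List.filterMap Prod.snd) hconv
  refine ⟨z.filterMap Prod.fst, z.filterMap Prod.snd, ?_, ?_,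
    (List.length_filterMap_le _ _).trans hzlen, (List.length_filterMap_le _ _).trans hzlen,
    hu' ▸ hv' ▸ hR'⟩
  · simpa only [drop_conv, filterMap_fst_conv] using hz.filterMap Prod.fst
  · simpa only [drop_conv, filterMap_snd_conv] using hz.filterMap Prod.snd

namespace HasCompletions

variable {R : Set (List α × List α)} {C : ℕ} {u v : List α}

lemma mono {C' : ℕ} (hR : HasCompletions R C) (hC : C ≤ C') : HasCompletions R C' :=
  fun u v huv k =>
    let ⟨z₁, z₂, hz₁, hz₂, hlen₁, hlen₂, hmem⟩ := hR u v huv k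
    ⟨z₁, z₂, hz₁, hz₂, hlen₁.trans hC, hlen₂.trans hC, hmem⟩

-- Truncating at the end of `u` leaves `u` unchanged, since its completion is a sublist of `[]`.
lemma length_snd_le (hR : HasCompletions R C) (huv : (u, v) ∈ R)
    (hv : ∀ v', (u, v') ∈ R → v' = v) : v.length ≤ u.length + C := by
  obtain ⟨z₁, z₂, hz₁, -, -, hlen, hmem⟩ := hR u v huv u.length
  obtain rfl : z₁ = [] := by simpa using hz₁
  rw [List.take_length, List.append_nil] at hmem
  rw [← hv _ hmem, List.length_append]
  exact add_le_add (List.length_take_le _ _) hlen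

lemma length_fst_le (hR : HasCompletions R C) (huv : (u, v) ∈ R)
    (hu : ∀ u', (u', v) ∈ R → u' = u) : u.length ≤ v.length + C := by
  obtain ⟨z₁, z₂, -, hz₂, hlen, -, hmem⟩ := hR u v huv v.length
  obtain rfl : z₂ = [] := by simpa using hz₂
  rw [List.take_length, List.append_nil] at hmem
  rw [← hu _ hmem, List.length_append]
  exact add_le_add (List.length_take_le _ _) hlen

end HasCompletions

end RegularRelations

section CayleyGraph

variable {G : Type*} [Group G] {A : Set G}

@[simp] lemma eval_nil : eval A [] = 1 := rfl

@[simp] lemma eval_cons (s : Alph A) (w : List (Alph A)) :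
    eval A (s :: w) = s.val * eval A w := List.prod_cons

@[simp] lemma eval_append (u v : List (Alph A)) : eval A (u ++ v) = eval A u * eval A v := by
  induction u with
  | nil => simp
  | cons s u ih => simp [ih, mul_assoc]

lemma exists_eval_eq (hA : Subgroup.closure A = ⊤) (g : G) :
    ∃ w : List (Alph A), eval A w = g := by
  have hg : g ∈ Submonoid.closure (A ∪ A⁻¹) := by
    rw [← Subgroup.closure_toSubmonoid, hA]; trivial
  obtain ⟨l, hl, rfl⟩ := Submonoid.exists_list_of_mem_closure hg
  lift l to List {x // x ∈ A ∪ A⁻¹} using hl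
  exact ⟨l, rfl⟩

lemma exists_eval_eq_inv (w : List (Alph A)) :
    ∃ v : List (Alph A), v.length = w.length ∧ eval A v = (eval A w)⁻¹ := by
  induction w with
  | nil => exact ⟨[], rfl, by simp⟩
  | cons s w ih =>
    obtain ⟨v, hlen, hv⟩ := ih
    obtain ⟨s', hs'⟩ : ∃ s' : Alph A, s'.val = s.val⁻¹ :=
      ⟨⟨s.val⁻¹, s.2.symm.imp id (by simp)⟩, rfl⟩
    exact ⟨v ++ [s'], by simp [hlen], by simp [hv, hs']⟩

lemma cayleyDist_le_iff (hA : Subgroup.closure A = ⊤) {g h : G} {m : ℕ} :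
    cayleyDist A g h ≤ m ↔ ∃ w : List (Alph A), w.length ≤ m ∧ g * eval A w = h := by
  constructor
  · intro hm
    obtain ⟨w, hw⟩ := exists_eval_eq hA (g⁻¹ * h)
    have hne : {n | ∃ w : List (Alph A), eval A w = g⁻¹ * h ∧ w.length = n}.Nonempty :=
      ⟨_, w, hw, rfl⟩
    obtain ⟨v, hv, hlen⟩ := Nat.sInf_mem hne
    exact ⟨v, hlen.trans_le hm, by rw [hv, mul_inv_cancel_left]⟩
  · rintro ⟨w, hlen, rfl⟩
    refine le_trans (Nat.sInf_le ?_) hlen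
    exact ⟨w, by rw [inv_mul_cancel_left], rfl⟩

lemma cayleyDist_triangle (hA : Subgroup.closure A = ⊤) (g h k : G) :
    cayleyDist A g k ≤ cayleyDist A g h + cayleyDist A h k := by
  obtain ⟨u, hulen, hu⟩ := (cayleyDist_le_iff hA).1 (le_refl (cayleyDist A g h))
  obtain ⟨v, hvlen, hv⟩ := (cayleyDist_le_iff hA).1 (le_refl (cayleyDist A h k))
  refine (cayleyDist_le_iff hA).2 ⟨u ++ v, ?_, ?_⟩
  · rw [List.length_append]; exact add_le_add hulen hvlen
  · rw [eval_append, ← mul_assoc, hu, hv]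

lemma cayleyDist_comm (hA : Subgroup.closure A = ⊤) (g h : G) :
    cayleyDist A g h = cayleyDist A h g := by
  have hle (g h : G) : cayleyDist A h g ≤ cayleyDist A g h := by
    obtain ⟨u, hulen, rfl⟩ := (cayleyDist_le_iff hA).1 (le_refl (cayleyDist A g h))
    obtain ⟨v, hvlen, hv⟩ := exists_eval_eq_inv u
    exact (cayleyDist_le_iff hA).2
      ⟨v, hvlen.trans_le hulen, by rw [hv, mul_inv_cancel_right]⟩
  exact (hle h g).antisymm (hle g h)

lemma cayleyDist_mul_eval_le (hA : Subgroup.closure A = ⊤) (g : G) (w : List (Alph A)) :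
    cayleyDist A g (g * eval A w) ≤ w.length :=
  (cayleyDist_le_iff hA).2 ⟨w, le_rfl, rfl⟩

lemma cayleyDist_mul_le_one (hA : Subgroup.closure A = ⊤) (g : G) {s : G} (hs : s ∈ A) :
    cayleyDist A g (g * s) ≤ 1 := by
  obtain ⟨s, rfl⟩ : ∃ s' : Alph A, s'.val = s := ⟨⟨s, Or.inl hs⟩, rfl⟩
  simpa using cayleyDist_mul_eval_le hA g [s]

end CayleyGraph

section PathSums

variable {G : Type*} [Group G] {A : Set G}

/-- The sum of the values of `e` on the successive edges `(h, h * s)` of the path in the Cayley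
graph that starts at `g` and is labelled by the given word: the discrete line integral of `e`. -/
def pathSum (e : G → G → ℝ) : G → List (Alph A) → ℝ
  | _, [] => 0
  | g, s :: w => e g (g * s.val) + pathSum e (g * s.val) w

variable (e : G → G → ℝ)

@[simp] lemma pathSum_nil (g : G) : pathSum (A := A) e g [] = 0 := rfl

@[simp] lemma pathSum_cons (g : G) (s : Alph A) (w : List (Alph A)) :
    pathSum e g (s :: w) = e g (g * s.val) + pathSum e (g * s.val) w := rfl

lemma pathSum_append (g : G) (u v : List (Alph A)) :
    pathSum e g (u ++ v) = pathSum e g u + pathSum e (g * eval A u) v := by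
  induction u generalizing g with
  | nil => simp
  | cons s u ih => simp [ih, mul_assoc, add_assoc]

variable {e}

lemma abs_pathSum_sub_sub_le {P : G → ℝ} {Δ : ℝ} {l : ℕ}
    (hP : ∀ (u : List (Alph A)) (s : Alph A), u.length < l →
      |e (eval A u) (eval A u * s.val) - (P (eval A u * s.val) - P (eval A u))| ≤ Δ)
    (u : List (Alph A)) (hu : u.length ≤ l) :
    |pathSum e 1 u - (P (eval A u) - P 1)| ≤ u.length * Δ := by
  induction u using List.reverseRecOn with
  | nil => simp
  | append_singleton u s ih =>
    rw [List.length_append, List.length_singleton] at hu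
    have hedge := hP u s hu
    have hsum := ih (by omega)
    simp only [pathSum_append, eval_append, eval_cons, eval_nil, pathSum_cons, pathSum_nil,
      one_mul, mul_one, add_zero, List.length_append, List.length_singleton, Nat.cast_add,
      Nat.cast_one]
    rw [abs_le] at *
    constructor <;> linarith

lemma abs_pathSum_sub_le_of_eval_eq {P : G → ℝ} {Δ : ℝ} {l : ℕ}
    (hP : ∀ (u : List (Alph A)) (s : Alph A), u.length < l →
      |e (eval A u) (eval A u * s.val) - (P (eval A u * s.val) - P (eval A u))| ≤ Δ)
    {u v : List (Alph A)} (huv : eval A u = eval A v) (hlen : u.length + v.length ≤ l) :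
    |pathSum e 1 u - pathSum e 1 v| ≤ (u.length + v.length) * Δ := by
  have hu := abs_pathSum_sub_sub_le hP u (by omega)
  have hv := abs_pathSum_sub_sub_le hP v (by omega)
  rw [huv] at hu
  rw [abs_le] at *
  constructor <;> linarith

variable (A e) in
/-- The discrete line integrals of `e` round closed paths of length at most `m` are bounded by
`b`. A closed path is presented as a pair of paths with the same endpoints, which avoids
reversing words. -/
def LoopBound (m : ℕ) (b : ℝ) : Prop :=
  ∀ (g : G) (u v : List (Alph A)), eval A u = eval A v → u.length + v.length ≤ m →
    |pathSum e g u - pathSum e g v| ≤ b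

lemma LoopBound.nonneg {m : ℕ} {b : ℝ} (hb : LoopBound A e m b) : 0 ≤ b := by
  simpa using hb 1 [] [] rfl (Nat.zero_le m)

lemma LoopBound.anti {m m' : ℕ} {b : ℝ} (hb : LoopBound A e m b) (hm : m' ≤ m) :
    LoopBound A e m' b :=
  fun g u v huv hlen => hb g u v huv (hlen.trans hm)

-- The strip between the two paths is cut into `k` loops of length at most `2 * (m + 1)`, each
-- bounded by two consecutive rungs and one edge of either path.
lemma LoopBound.abs_pathSum_take_append_sub_le {m : ℕ} {b : ℝ}
    (hb : LoopBound A e (2 * (m + 1)) b) (hA : Subgroup.closure A = ⊤) {w w' : List (Alph A)}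
    (hdist : ∀ k, cayleyDist A (eval A (w.take k)) (eval A (w'.take k)) ≤ m) (k : ℕ)
    (z : List (Alph A)) (hz : z.length ≤ m)
    (heval : eval A (w.take k) * eval A z = eval A (w'.take k)) :
    |pathSum e 1 (w.take k ++ z) - pathSum e 1 (w'.take k)| ≤ (k + 1) * b := by
  induction k generalizing z with
  | zero => simpa using hb 1 z [] (by simpa using heval) (by simp; omega)
  | succ k ih =>
    obtain ⟨r, hrlen, hr⟩ := (cayleyDist_le_iff hA).1 (hdist k)
    have hsum := ih r hrlen hr
    have hstep : w[k]?.toList.length ≤ 1 := by cases w[k]? <;> simp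
    have hstep' : w'[k]?.toList.length ≤ 1 := by cases w'[k]? <;> simp
    rw [List.take_add_one, List.take_add_one] at heval ⊢
    generalize w[k]?.toList = x at *
    generalize w'[k]?.toList = x' at *
    simp only [eval_append, ← hr, mul_assoc, mul_right_inj] at heval
    have hloop := hb (eval A (w.take k)) (x ++ z) (r ++ x')
      (by simpa only [eval_append] using heval)
      (by simp only [List.length_append]; omega)
    simp only [pathSum_append, eval_append, one_mul, hr] at hsum hloop ⊢
    push_cast
    rw [abs_le] at *
    constructor <;> linarith

end PathSums

open Filter in
lemma eventually_mul_pow_lt_pow {r : ℝ} (hr : 1 < r) (K : ℝ) (d : ℕ) :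
    ∀ᶠ k : ℕ in atTop, K * k ^ d < r ^ k := by
  have hK : 0 < |K| + 1 := by positivity
  have hlittle := (isLittleO_pow_const_const_pow_of_one_lt (R := ℝ) d hr).def (inv_pos.2 hK)
  filter_upwards [hlittle] with k hk
  have hpow : 0 < r ^ k := pow_pos (zero_lt_one.trans hr) k
  rw [Real.norm_of_nonneg (by positivity), Real.norm_of_nonneg hpow.le, inv_mul_eq_div,
    le_div_iff₀ hK] at hk
  rcases eq_or_lt_of_le (pow_nonneg k.cast_nonneg d : (0 : ℝ) ≤ k ^ d) with h0 | h0
  · rwa [← h0, mul_zero]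
  · nlinarith [le_abs_self K]

section Filling

variable {G : Type*} [Group G] {A : Set G} {L : Language (Alph A)} {ψ : List (Alph A) → G}
  {C n h : ℕ}

variable (L ψ) in
/-- The relation `R_s` of the definition of a Cayley automatic representation: it relates the
representatives of `g` and `g * s` for every `g`. -/
def edgeRel (s : G) : Set (List (Alph A) × List (Alph A)) :=
  {p | p.1 ∈ L ∧ p.2 ∈ L ∧ ψ p.2 = ψ p.1 * s}

variable (L ψ) in
/-- The representation `ψ` is within distance `h` of the evaluation map on the words of `L` of
length at most `n`: the bound `h(n) ≤ h` of the paper. -/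
def DeviationLE (n h : ℕ) : Prop :=
  ∀ w ∈ L, w.length ≤ n → cayleyDist A (eval A w) (ψ w) ≤ h

lemma IsCayleyAutomaticRep.exists_hasCompletions_edgeRel (hψ : IsCayleyAutomaticRep A L ψ)
    (hfin : A.Finite) : ∃ C, ∀ s ∈ A, HasCompletions (edgeRel L ψ s) C := by
  choose! c hc using fun s hs => (hψ.2.2 s hs).exists_hasCompletions
  obtain ⟨C, hC⟩ := (hfin.image c).bddAbove
  exact ⟨C, fun s hs => (hc s hs).mono (hC (Set.mem_image_of_mem c hs))⟩

lemma length_le_of_apply_eq_eval (hψ : Set.BijOn ψ L Set.univ)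
    (hC : ∀ s ∈ A, HasCompletions (edgeRel L ψ s) C) {w₁ : List (Alph A)} (hw₁ : w₁ ∈ L)
    (hone : ψ w₁ = 1) (u : List (Alph A)) {w : List (Alph A)} (hw : w ∈ L)
    (hwu : ψ w = eval A u) : w.length ≤ w₁.length + C * u.length := by
  induction u using List.reverseRecOn generalizing w with
  | nil => rw [hψ.injOn hw hw₁ (hwu.trans hone.symm)]; exact Nat.le_add_right _ _
  | append_singleton u s ih =>
    obtain ⟨v, hv, hvu⟩ := hψ.surjOn (Set.mem_univ (eval A u))
    have hvw : ψ w = ψ v * s.val := by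
      rw [hwu, hvu, eval_append, eval_cons, eval_nil, mul_one]
    have hstep : w.length ≤ v.length + C := by
      rcases s.2 with hs | hs
      · exact (hC _ hs).length_snd_le ⟨hv, hw, hvw⟩
          fun w' hw' => hψ.injOn hw'.2.1 hw (hw'.2.2.trans hvw.symm)
      · have hwv : ψ v = ψ w * s.val⁻¹ := by rw [hvw, mul_inv_cancel_right]
        exact (hC _ hs).length_fst_le ⟨hw, hv, hwv⟩
          fun w' hw' => hψ.injOn hw'.1 hw (mul_right_cancel (hw'.2.2.symm.trans hwv))
    rw [List.length_append, List.length_singleton, mul_add_one, ← add_assoc]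
    exact hstep.trans (Nat.add_le_add_right (ih hv hvu) C)

namespace DeviationLE

lemma cayleyDist_eval_le (hdev : DeviationLE L ψ n h) (hA : Subgroup.closure A = ⊤)
    {x z : List (Alph A)} (hxz : x ++ z ∈ L) (hlen : (x ++ z).length ≤ n) :
    cayleyDist A (eval A x) (ψ (x ++ z)) ≤ z.length + h :=
  (cayleyDist_triangle hA _ _ _).trans <| add_le_add
    (eval_append x z ▸ cayleyDist_mul_eval_le hA _ z) (hdev _ hxz hlen)

lemma cayleyDist_eval_take_le (hdev : DeviationLE L ψ n h) (hA : Subgroup.closure A = ⊤) {s : G}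
    (hs : s ∈ A) (hC : HasCompletions (edgeRel L ψ s) C) {w w' : List (Alph A)}
    (hww' : (w, w') ∈ edgeRel L ψ s) (hw : w.length + C ≤ n) (hw' : w'.length + C ≤ n) (k : ℕ) :
    cayleyDist A (eval A (w.take k)) (eval A (w'.take k)) ≤ 2 * (C + h) + 1 := by
  obtain ⟨z, z', -, -, hz, hz', hmem, hmem', hψ⟩ := hC w w' hww' k
  have hprefix : cayleyDist A (eval A (w.take k)) (ψ (w.take k ++ z)) ≤ z.length + h :=
    hdev.cayleyDist_eval_le hA hmem (by simp only [List.length_append, List.length_take]; omega)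
  have hprefix' : cayleyDist A (eval A (w'.take k)) (ψ (w'.take k ++ z')) ≤ z'.length + h :=
    hdev.cayleyDist_eval_le hA hmem' (by simp only [List.length_append, List.length_take]; omega)
  have hedge : cayleyDist A (ψ (w.take k ++ z)) (ψ (w'.take k ++ z')) ≤ 1 := by
    dsimp only at hψ
    rw [hψ]
    exact cayleyDist_mul_le_one hA _ hs
  have htri := cayleyDist_triangle hA (eval A (w.take k)) (ψ (w.take k ++ z))
    (eval A (w'.take k))
  have htri' := cayleyDist_triangle hA (ψ (w.take k ++ z)) (ψ (w'.take k ++ z'))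
    (eval A (w'.take k))
  rw [cayleyDist_comm hA (eval A (w'.take k))] at hprefix'
  omega

end DeviationLE

variable {e : G → G → ℝ} {b : ℝ}

lemma LoopBound.abs_pathSum_add_sub_pathSum_le (hb : LoopBound A e (4 * (C + h + 1)) b)
    (hdev : DeviationLE L ψ n h) (hA : Subgroup.closure A = ⊤) {s : G}
    (hs : s ∈ A) (hC : HasCompletions (edgeRel L ψ s) C) {w w' z z' : List (Alph A)}
    (hww' : (w, w') ∈ edgeRel L ψ s) (hw : w.length + C ≤ n) (hw' : w'.length + C ≤ n)
    (hz : z.length ≤ h) (hz' : z'.length ≤ h)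
    (hwz : eval A w * eval A z = ψ w) (hwz' : eval A w' * eval A z' = ψ w') :
    |pathSum e 1 (w ++ z) + e (ψ w) (ψ w * s) - pathSum e 1 (w' ++ z')| ≤ (n + 2) * b := by
  have hdist := hdev.cayleyDist_eval_take_le hA hs hC hww' hw hw'
  obtain ⟨r, hrlen, hr⟩ := (cayleyDist_le_iff hA).1 (hdist n)
  have hb' : LoopBound A e (2 * (2 * (C + h) + 1 + 1)) b := by
    rwa [show 2 * (2 * (C + h) + 1 + 1) = 4 * (C + h + 1) by ring]
  have hstrip := hb'.abs_pathSum_take_append_sub_le hA hdist n r hrlen hr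
  rw [List.take_of_length_le (by omega), List.take_of_length_le (by omega)] at hstrip hr
  obtain ⟨s, rfl⟩ : ∃ s' : Alph A, s'.val = s := ⟨⟨s, Or.inl hs⟩, rfl⟩
  have hclosed : eval A (r ++ z') = eval A (z ++ [s]) := by
    refine mul_left_cancel (a := eval A w) ?_
    simp only [eval_append, eval_cons, eval_nil, mul_one, ← mul_assoc, hr, hwz, hwz', hww'.2.2]
  have hloop := hb (eval A w) (r ++ z') (z ++ [s]) hclosed
    (by simp only [List.length_append, List.length_singleton]; omega)
  simp only [pathSum_append, pathSum_cons, pathSum_nil, one_mul, add_zero, hr, hwz]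
    at hstrip hloop ⊢
  rw [abs_le] at *
  constructor <;> linarith

-- The potential of a word `w` of `L` is the integral along `w`, followed by a short path from the
-- element which `w` spells to the element which it represents.
lemma LoopBound.exists_approxPotential (hb : LoopBound A e (4 * (C + h + 1)) b)
    (hdev : DeviationLE L ψ n h) (hA : Subgroup.closure A = ⊤)
    (hC : ∀ s ∈ A, HasCompletions (edgeRel L ψ s) C) :
    ∃ P : List (Alph A) → ℝ, ∀ s ∈ A, ∀ w w', (w, w') ∈ edgeRel L ψ s →
      w.length + C ≤ n → w'.length + C ≤ n →
        |e (ψ w) (ψ w * s) - (P w' - P w)| ≤ (n + 2) * b := by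
  have htail (w : List (Alph A)) : ∃ z : List (Alph A), w ∈ L → w.length ≤ n →
      z.length ≤ h ∧ eval A w * eval A z = ψ w := by
    by_cases hw : w ∈ L ∧ w.length ≤ n
    · obtain ⟨z, hz⟩ := (cayleyDist_le_iff hA).1 (hdev w hw.1 hw.2)
      exact ⟨z, fun _ _ => hz⟩
    · exact ⟨[], fun h₁ h₂ => absurd ⟨h₁, h₂⟩ hw⟩
  choose tail htail using htail
  refine ⟨fun w => pathSum e 1 (w ++ tail w), fun s hs w w' hww' hw hw' => ?_⟩
  obtain ⟨hz, hwz⟩ := htail w hww'.1 (le_of_add_le_left hw)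
  obtain ⟨hz', hwz'⟩ := htail w' hww'.2.1 (le_of_add_le_left hw')
  convert hb.abs_pathSum_add_sub_pathSum_le hdev hA hs (hC s hs) hww' hw hw' hz hz' hwz hwz'
    using 2
  ring

-- The strips between the representatives of neighbouring vertices of `u` and `v` fill the loop.
theorem IsCayleyAutomaticRep.exists_abs_pathSum_sub_le (hψ : IsCayleyAutomaticRep A L ψ)
    (hfin : A.Finite) (hA : Subgroup.closure A = ⊤) :
    ∃ C : ℕ, ∀ (e : G → G → ℝ) (n h l : ℕ) (b : ℝ), (∀ g k, e k g = -e g k) →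
      C * (l + 2) ≤ n → DeviationLE L ψ n h → LoopBound A e (4 * (C + h + 1)) b →
      ∀ u v : List (Alph A), eval A u = eval A v → u.length + v.length ≤ l →
        |pathSum e 1 u - pathSum e 1 v| ≤ l * ((n + 2) * b) := by
  obtain ⟨C₀, hC₀⟩ := hψ.exists_hasCompletions_edgeRel hfin
  choose rep hrep hψrep using fun g => hψ.2.1.surjOn (Set.mem_univ g)
  let C := (rep 1).length + C₀
  have hC : ∀ s ∈ A, HasCompletions (edgeRel L ψ s) C :=
    fun s hs => (hC₀ s hs).mono (Nat.le_add_left _ _)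
  refine ⟨C, fun e n h l b he hn hdev hb u v huv hlen => ?_⟩
  have hreplen (u : List (Alph A)) (hu : u.length ≤ l) : (rep (eval A u)).length + C ≤ n :=
    calc (rep (eval A u)).length + C ≤ (rep 1).length + C * u.length + C := by
          gcongr
          exact length_le_of_apply_eq_eval hψ.2.1 hC (hrep 1) (hψrep 1) u (hrep _) (hψrep _)
      _ ≤ C + C * l + C := by gcongr; exact Nat.le_add_right _ _
      _ = C * (l + 2) := by ring
      _ ≤ n := hn
  obtain ⟨P, hP⟩ := hb.exists_approxPotential hdev hA hC
  have hedge (g s : G) (hs : s ∈ A) (hg : (rep g).length + C ≤ n)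
      (hgs : (rep (g * s)).length + C ≤ n) :
      |e g (g * s) - (P (rep (g * s)) - P (rep g))| ≤ (n + 2) * b := by
    simpa only [hψrep] using
      hP s hs (rep g) (rep (g * s)) ⟨hrep _, hrep _, by rw [hψrep, hψrep]⟩ hg hgs
  have hletter (u : List (Alph A)) (s : Alph A) (hu : u.length < l) :
      |e (eval A u) (eval A u * s.val) - (P (rep (eval A u * s.val)) - P (rep (eval A u)))|
        ≤ (n + 2) * b := by
    have hg := hreplen u hu.le
    have hgs : (rep (eval A u * s.val)).length + C ≤ n := by
      simpa using hreplen (u ++ [s]) (by simpa using hu)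
    rcases s.2 with hs | hs
    · exact hedge _ _ hs hg hgs
    · have hle := hedge (eval A u * s.val) s.val⁻¹ hs hgs (by rwa [mul_inv_cancel_right])
      rw [mul_inv_cancel_right, he (eval A u), ← abs_neg] at hle
      convert hle using 2
      ring
  have hΔ : 0 ≤ (n + 2) * b := mul_nonneg (by positivity) hb.nonneg
  refine (abs_pathSum_sub_le_of_eval_eq (P := fun g => P (rep g)) hletter huv hlen).trans ?_
  exact mul_le_mul_of_nonneg_right (by exact_mod_cast hlen) hΔ

end Filling

section AreaForm

/-- The 1-form `x dy` on pairs of vertices, discretized by the trapezoidal rule so that reversing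
an edge changes the sign. -/
noncomputable def areaForm {V : Type*} (x y : V → ℝ) (g h : V) : ℝ := (x g + x h) / 2 * (y h - y g)

lemma areaForm_swap {V : Type*} (x y : V → ℝ) (g h : V) : areaForm x y h g = -areaForm x y g h := by
  unfold areaForm
  ring

lemma pathSum_areaForm_sub_const {G : Type*} [Group G] {A : Set G} (x y : G → ℝ) (β : ℝ) (g : G)
    (w : List (Alph A)) :
    pathSum (areaForm (fun k => x k - β) y) g w =
      pathSum (areaForm x y) g w - β * (y (g * eval A w) - y g) := by
  induction w generalizing g with
  | nil => simp
  | cons s w ih =>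
    simp only [pathSum_cons, ih, eval_cons, mul_assoc, areaForm]
    ring

end AreaForm

namespace BS

/-- The standard generating set `{a, t}` of `BS(p,q)`. -/
abbrev gens (p q : ℕ) : Set (BS p q) := {BS.a p q, BS.t p q}

variable {p q : ℕ}

lemma closure_gens : Subgroup.closure (gens p q) = ⊤ := by
  rw [← PresentedGroup.closure_range_of (BSRels p q)]
  congr 1
  ext g
  simp [Fin.exists_fin_two, BS.a, BS.t, eq_comm]

lemma t_mul_a_pow_mul_inv_t (k : ℕ) :
    BS.t p q * BS.a p q ^ (p * k) * (BS.t p q)⁻¹ = BS.a p q ^ (q * k) := by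
  have hrel : BS.t p q * BS.a p q ^ p * (BS.t p q)⁻¹ = BS.a p q ^ q :=
    mul_inv_eq_one.1 (PresentedGroup.one_of_mem (Set.mem_singleton _))
  rw [pow_mul, pow_mul, ← hrel, conj_pow]

lemma letter_cases (s : Alph (gens p q)) : s.val = BS.a p q ∨ s.val = (BS.a p q)⁻¹ ∨
    s.val = BS.t p q ∨ s.val = (BS.t p q)⁻¹ := by
  rcases s.2 with (h | h) | h | h
  · exact .inl h
  · exact .inr (.inr (.inl h))
  · exact .inr (.inl (inv_eq_iff_eq_inv.1 h))
  · exact .inr (.inr (.inr (inv_eq_iff_eq_inv.1 h)))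

lemma one_le_div [NeZero p] (hpq : p ≤ q) : 1 ≤ (q / p : ℝ) :=
  (one_le_div₀ (by exact_mod_cast NeZero.pos p)).2 (by exact_mod_cast hpq)

section State

/-- The data recorded along a path in the Cayley graph of `BS(p,q)`: the level, which is the
exponent sum of `t`; the position in the horizontal direction, in which an `a`-edge at level `n`
has length `(q/p) ^ n`; and the number of `t`-edges crossed upwards, minus those crossed
downwards, from level `0` at a position in `qℤ`. -/
@[ext] structure State where
  level : ℤ
  pos : ℝ
  count : ℝ

/-- The indicator of the `t`-edges that are counted, as a function of their lower endpoint. -/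
noncomputable def gate (q : ℕ) (n : ℤ) (x : ℝ) : ℝ :=
  if n = 0 ∧ Int.fract (x / q) = 0 then 1 else 0

lemma gate_of_ne_zero {n : ℤ} (hn : n ≠ 0) (x : ℝ) : gate q n x = 0 :=
  if_neg fun h => hn h.1

lemma abs_gate_le_one (n : ℤ) (x : ℝ) : |gate q n x| ≤ 1 := by
  unfold gate
  split_ifs <;> simp

lemma gate_add_natCast [NeZero q] (x : ℝ) : gate q 0 (x + q) = gate q 0 x := by
  have hq : (q : ℝ) ≠ 0 := NeZero.ne _
  rw [gate, gate, add_div, div_self hq, Int.fract_add_one]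

lemma gate_zero_natCast [NeZero q] (n : ℕ) : gate q 0 n = if q ∣ n then 1 else 0 := by
  have hq : (q : ℝ) ≠ 0 := NeZero.ne _
  simp [gate, Int.fract_div_natCast_eq_div_natCast_mod, hq, Nat.dvd_iff_mod_eq_zero]

/-- The effect of the generator `a` on states. -/
noncomputable def permA (p q : ℕ) : Equiv.Perm State where
  toFun y := { y with pos := y.pos + (q / p : ℝ) ^ y.level }
  invFun y := { y with pos := y.pos - (q / p : ℝ) ^ y.level }
  left_inv y := by simp
  right_inv y := by simp

/-- The effect of the generator `t` on states. -/
noncomputable def permT (q : ℕ) : Equiv.Perm State where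
  toFun y := ⟨y.level + 1, y.pos, y.count + gate q y.level y.pos⟩
  invFun y := ⟨y.level - 1, y.pos, y.count - gate q (y.level - 1) y.pos⟩
  left_inv y := by simp
  right_inv y := by simp

lemma permA_pow_apply (k : ℕ) (y : State) :
    (permA p q ^ k) y = { y with pos := y.pos + k * (q / p : ℝ) ^ y.level } := by
  induction k generalizing y with
  | zero => simp
  | succ k ih =>
    rw [pow_succ, Equiv.Perm.mul_apply, ih]
    ext
    · rfl
    · simp only [permA, Equiv.coe_fn_mk]
      push_cast
      ring
    · rfl

variable [NeZero p] [NeZero q]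

lemma permA_pow_mul_permT : permA p q ^ p * permT q = permT q * permA p q ^ q := by
  have hp : (p : ℝ) ≠ 0 := NeZero.ne _
  have hq : (q : ℝ) ≠ 0 := NeZero.ne _
  ext y
  · simp [permA_pow_apply, permT]
  · simp only [Equiv.Perm.mul_apply, permA_pow_apply, permT, Equiv.coe_fn_mk,
      zpow_add_one₀ (div_ne_zero hq hp)]
    field_simp
  · simp only [Equiv.Perm.mul_apply, permA_pow_apply, permT, Equiv.coe_fn_mk]
    by_cases hy : y.level = 0
    · rw [hy, zpow_zero, mul_one, gate_add_natCast]
    · rw [gate_of_ne_zero hy, gate_of_ne_zero hy]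

/-- The action of `BS(p,q)` on states from the right. -/
noncomputable def action (p q : ℕ) [NeZero p] [NeZero q] :
    BS p q →* (Equiv.Perm State)ᵐᵒᵖ :=
  PresentedGroup.toGroup (f := ![.op (permA p q), .op (permT q)]) <| by
    rintro _ rfl
    apply MulOpposite.unop_injective
    simp only [map_mul, map_pow, map_inv, FreeGroup.lift_apply_of, Matrix.cons_val_zero,
      Matrix.cons_val_one, MulOpposite.unop_mul, MulOpposite.unop_inv, MulOpposite.unop_pow,
      MulOpposite.unop_op, MulOpposite.unop_one, permA_pow_mul_permT]
    group

/-- The state reached from the identity, whose state is zero, along any path to `g`. -/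
noncomputable def state (g : BS p q) : State := (action p q g).unop ⟨0, 0, 0⟩

@[simp] lemma state_one : state (1 : BS p q) = ⟨0, 0, 0⟩ := by simp [state]

lemma state_mul (g k : BS p q) : state (g * k) = (action p q k).unop (state g) := by
  simp [state]

lemma state_mul_a_pow (g : BS p q) (k : ℕ) : state (g * BS.a p q ^ k) =
    { state g with pos := (state g).pos + k * (q / p : ℝ) ^ (state g).level } := by
  rw [state_mul, map_pow, MulOpposite.unop_pow, ← permA_pow_apply]
  rfl

@[simp] lemma state_mul_a (g : BS p q) : state (g * BS.a p q) =
    { state g with pos := (state g).pos + (q / p : ℝ) ^ (state g).level } :=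
  state_mul g _

@[simp] lemma state_mul_inv_a (g : BS p q) : state (g * (BS.a p q)⁻¹) =
    { state g with pos := (state g).pos - (q / p : ℝ) ^ (state g).level } := by
  rw [state_mul, map_inv]
  rfl

@[simp] lemma state_mul_t (g : BS p q) : state (g * BS.t p q) =
    ⟨(state g).level + 1, (state g).pos,
      (state g).count + gate q (state g).level (state g).pos⟩ :=
  state_mul g _

@[simp] lemma state_mul_inv_t (g : BS p q) : state (g * (BS.t p q)⁻¹) =
    ⟨(state g).level - 1, (state g).pos,
      (state g).count - gate q ((state g).level - 1) (state g).pos⟩ := by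
  rw [state_mul, map_inv]
  rfl

end State

section Area

variable [NeZero p] [NeZero q]

/-- The 1-form `x dy` for `x` the position and `y` the count of a vertex. -/
noncomputable def form (p q : ℕ) [NeZero p] [NeZero q] : BS p q → BS p q → ℝ :=
  areaForm (fun g => (state g).pos) fun g => (state g).count

lemma level_le_level_mul_add_one (g : BS p q) (s : Alph (gens p q)) :
    (state g).level ≤ (state (g * s.val)).level + 1 := by
  rcases letter_cases s with hs | hs | hs | hs <;>
    simp only [hs, state_mul_a, state_mul_inv_a, state_mul_t, state_mul_inv_t] <;> omega

lemma abs_pos_mul_sub_pos_le (g : BS p q) (s : Alph (gens p q)) :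
    |(state (g * s.val)).pos - (state g).pos| ≤ (q / p : ℝ) ^ (state g).level := by
  have hθ : 0 ≤ (q / p : ℝ) ^ (state g).level := by positivity
  rcases letter_cases s with hs | hs | hs | hs <;> simp [hs, hθ, abs_of_nonneg]

lemma pos_mul_eq_or_count_mul_eq (g : BS p q) (s : Alph (gens p q)) :
    (state (g * s.val)).pos = (state g).pos ∨ (state (g * s.val)).count = (state g).count := by
  rcases letter_cases s with hs | hs | hs | hs <;> simp [hs]

lemma abs_count_mul_sub_count_le_one (g : BS p q) (s : Alph (gens p q)) :
    |(state (g * s.val)).count - (state g).count| ≤ 1 := by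
  rcases letter_cases s with hs | hs | hs | hs <;> simp [hs, abs_gate_le_one]

lemma count_mul_eq_of_one_lt_level {g : BS p q} (hg : 1 < (state g).level)
    (s : Alph (gens p q)) : (state (g * s.val)).count = (state g).count := by
  rcases letter_cases s with hs | hs | hs | hs <;> simp only [hs, state_mul_a, state_mul_inv_a,
    state_mul_t, state_mul_inv_t]
  · rw [gate_of_ne_zero (by omega), add_zero]
  · rw [gate_of_ne_zero (by omega), sub_zero]

lemma pathSum_areaForm_count_eq_zero (x : BS p q → ℝ) (g : BS p q) (w : List (Alph (gens p q)))
    (hw : w.length < (state g).level) :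
    pathSum (areaForm x fun k => (state k).count) g w = 0 := by
  induction w generalizing g with
  | nil => rfl
  | cons s w ih =>
    rw [List.length_cons, Nat.cast_succ] at hw
    have hlevel := level_le_level_mul_add_one g s
    rw [pathSum_cons, ih _ (by omega), areaForm,
      count_mul_eq_of_one_lt_level (by omega) s, sub_self, mul_zero, add_zero]

lemma abs_areaForm_mul_le (β : ℝ) (g : BS p q) (s : Alph (gens p q)) :
    |areaForm (fun k => (state k).pos - β) (fun k => (state k).count) g (g * s.val)| ≤
      |(state g).pos - β| := by
  rw [areaForm]
  rcases pos_mul_eq_or_count_mul_eq g s with h | h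
  · rw [h, add_self_div_two, abs_mul]
    exact mul_le_of_le_one_right (abs_nonneg _) (abs_count_mul_sub_count_le_one g s)
  · simp [h]

-- A path of length `n` which starts above level `n` crosses no counted edge, and below that level
-- each of its edges has length at most `(q / p) ^ n`.
lemma abs_pathSum_areaForm_le (hpq : p ≤ q) (β : ℝ) (g : BS p q) (w : List (Alph (gens p q))) :
    |pathSum (areaForm (fun k => (state k).pos - β) fun k => (state k).count) g w| ≤
      w.length * (|(state g).pos - β| + w.length * (q / p : ℝ) ^ w.length) := by
  have hθ := one_le_div hpq
  induction w generalizing g with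
  | nil => simp
  | cons s w ih =>
    rcases lt_or_ge ((s :: w).length : ℤ) (state g).level with hlevel | hlevel
    · rw [pathSum_areaForm_count_eq_zero _ _ _ hlevel, abs_zero]
      positivity
    set n := w.length
    have hedge := abs_areaForm_mul_le β g s
    have hpos : |(state (g * s.val)).pos - β| ≤ |(state g).pos - β| + (q / p : ℝ) ^ (n + 1) := by
      have hstep : (q / p : ℝ) ^ (state g).level ≤ (q / p : ℝ) ^ (n + 1) := by
        rw [← zpow_natCast]
        exact zpow_le_zpow_right₀ hθ hlevel
      have htri := abs_sub_le (state (g * s.val)).pos (state g).pos β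
      linarith [abs_pos_mul_sub_pos_le g s]
    have hpow : (q / p : ℝ) ^ n ≤ (q / p : ℝ) ^ (n + 1) := pow_le_pow_right₀ hθ n.le_succ
    calc |pathSum _ g (s :: w)|
        ≤ |(state g).pos - β| + n * (|(state (g * s.val)).pos - β| + n * (q / p : ℝ) ^ n) :=
          (abs_add_le _ _).trans (add_le_add hedge (ih _))
      _ ≤ |(state g).pos - β| + n * (|(state g).pos - β| + (q / p : ℝ) ^ (n + 1)
            + n * (q / p : ℝ) ^ (n + 1)) := by gcongr
      _ = (n + 1) * |(state g).pos - β| + n * ((n + 1) * (q / p : ℝ) ^ (n + 1)) := by ring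
      _ ≤ (n + 1) * |(state g).pos - β| + (n + 1) * ((n + 1) * (q / p : ℝ) ^ (n + 1)) := by
          gcongr; linarith
      _ = ((s :: w).length : ℝ) * (|(state g).pos - β| +
            (s :: w).length * (q / p : ℝ) ^ (s :: w).length) := by
          rw [List.length_cons]; push_cast; ring

-- Along a closed path the form may be replaced by `(x - β) dy`, with `β` the initial position.
lemma loopBound_form (hpq : p ≤ q) (m : ℕ) :
    LoopBound (gens p q) (form p q) m (m * (m * (q / p : ℝ) ^ m)) := by
  have hθ := one_le_div hpq
  intro g u v huv hlen
  let shifted := pathSum (A := gens p q)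
    (areaForm (fun k => (state k).pos - (state g).pos) fun k => (state k).count) g
  have hshift : pathSum (form p q) g u - pathSum (form p q) g v = shifted u - shifted v := by
    simp only [shifted, pathSum_areaForm_sub_const, huv, form]
    ring
  have hbound (w : List (Alph (gens p q))) (hw : w.length ≤ m) :
      |shifted w| ≤ w.length * (m * (q / p : ℝ) ^ m) := by
    refine (abs_pathSum_areaForm_le hpq _ g w).trans ?_
    rw [sub_self, abs_zero, zero_add]
    gcongr
  calc |pathSum (form p q) g u - pathSum (form p q) g v|
      ≤ |shifted u| + |shifted v| := hshift ▸ abs_sub _ _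
    _ ≤ u.length * (m * (q / p : ℝ) ^ m) + v.length * (m * (q / p : ℝ) ^ m) :=
        add_le_add (hbound u (by omega)) (hbound v (by omega))
    _ = ((u.length + v.length : ℕ) : ℝ) * (m * (q / p : ℝ) ^ m) := by push_cast; ring
    _ ≤ m * (m * (q / p : ℝ) ^ m) := by gcongr

end Area

section Words

/-- The letter `a`. -/
def aLetter (p q : ℕ) : Alph (gens p q) := ⟨BS.a p q, .inl (.inl rfl)⟩

/-- The letter `t`. -/
def tLetter (p q : ℕ) : Alph (gens p q) := ⟨BS.t p q, .inl (.inr rfl)⟩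

/-- The letter `t⁻¹`. -/
def invTLetter (p q : ℕ) : Alph (gens p q) := ⟨(BS.t p q)⁻¹, .inr (.inr (inv_inv _))⟩

lemma val_aLetter : (aLetter p q).val = BS.a p q := rfl

lemma val_tLetter : (tLetter p q).val = BS.t p q := rfl

lemma val_invTLetter : (invTLetter p q).val = (BS.t p q)⁻¹ := rfl

/-- The exponents of the powers of `a` spelled by `powWord`. They grow exponentially, by a factor
of at least `q / p` at each step. -/
def powExp (p q : ℕ) : ℕ → ℕ
  | 0 => 1
  | i + 1 => q * (powExp p q i ⌈/⌉ p)

/-- Words of linearly growing length that spell the powers `a ^ powExp p q i`: the exponent is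
padded to a multiple of `p` before conjugating by `t`. -/
def powWord (p q : ℕ) : ℕ → List (Alph (gens p q))
  | 0 => [aLetter p q]
  | i + 1 => tLetter p q :: (powWord p q i ++
      List.replicate (p * (powExp p q i ⌈/⌉ p) - powExp p q i) (aLetter p q) ++ [invTLetter p q])

lemma eval_replicate_aLetter (k : ℕ) :
    eval (gens p q) (List.replicate k (aLetter p q)) = BS.a p q ^ k := by
  induction k with
  | zero => simp
  | succ k ih => rw [List.replicate_succ, eval_cons, ih, val_aLetter, pow_succ']

lemma dvd_powExp_succ (i : ℕ) : q ∣ powExp p q (i + 1) := dvd_mul_right _ _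

variable [NeZero p]

lemma le_mul_ceilDiv (n : ℕ) : n ≤ p * (n ⌈/⌉ p) := by
  simpa using le_smul_ceilDiv (b := n) (NeZero.pos p)

lemma mul_ceilDiv_lt (n : ℕ) : p * (n ⌈/⌉ p) < n + p := by
  have hp := NeZero.pos p
  have := Nat.mul_div_le (n + p - 1) p
  rw [Nat.ceilDiv_eq_add_pred_div]
  omega

lemma eval_powWord (i : ℕ) : eval (gens p q) (powWord p q i) = BS.a p q ^ powExp p q i := by
  induction i with
  | zero => exact eval_replicate_aLetter 1
  | succ i ih =>
    rw [powWord, eval_cons, val_tLetter, eval_append, eval_append, ih, eval_replicate_aLetter,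
      ← pow_add, Nat.add_sub_cancel' (le_mul_ceilDiv _), eval_cons, eval_nil, val_invTLetter,
      mul_one, ← mul_assoc, t_mul_a_pow_mul_inv_t, powExp]

lemma eval_cons_powWord (i : ℕ) :
    eval (gens p q) (aLetter p q :: powWord p q i) =
      eval (gens p q) (powWord p q i ++ [aLetter p q]) := by
  rw [eval_cons, eval_append, eval_cons, eval_nil, mul_one, eval_powWord, val_aLetter,
    ← pow_succ', ← pow_succ]

lemma length_powWord_le (i : ℕ) : (powWord p q i).length ≤ (p + 1) * i + 1 := by
  induction i with
  | zero => simp [powWord]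
  | succ i ih =>
    have hpad := mul_ceilDiv_lt (p := p) (powExp p q i)
    have hp := NeZero.pos p
    simp only [powWord, List.length_cons, List.length_append, List.length_replicate,
      List.length_nil]
    rw [mul_add_one]
    omega

lemma div_pow_le_powExp (i : ℕ) : (q / p : ℝ) ^ i ≤ powExp p q i := by
  induction i with
  | zero => simp [powExp]
  | succ i ih =>
    have hp : (0 : ℝ) < p := by exact_mod_cast NeZero.pos p
    have hceil : (powExp p q i : ℝ) ≤ p * (powExp p q i ⌈/⌉ p : ℕ) := by
      exact_mod_cast le_mul_ceilDiv (powExp p q i)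
    calc (q / p : ℝ) ^ (i + 1) ≤ powExp p q i * (q / p) := by rw [pow_succ]; gcongr
      _ ≤ p * (powExp p q i ⌈/⌉ p : ℕ) * (q / p) := by gcongr
      _ = powExp p q (i + 1) := by rw [powExp]; push_cast; field_simp

variable [NeZero q]

/-- The integral of `form` along the `t`-edge that starts at `g`. -/
noncomputable def flux (g : BS p q) : ℝ := form p q g (g * BS.t p q)

lemma form_mul_t (g : BS p q) : form p q g (g * BS.t p q) = flux g := rfl

lemma flux_eq (g : BS p q) :
    flux g = (state g).pos * gate q (state g).level (state g).pos := by
  simp [flux, form, areaForm]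

lemma form_mul_a (g : BS p q) : form p q g (g * BS.a p q) = 0 := by
  simp [form, areaForm]

lemma form_mul_inv_t (g : BS p q) :
    form p q g (g * (BS.t p q)⁻¹) = -flux (g * (BS.t p q)⁻¹) := by
  rw [← form_mul_t, inv_mul_cancel_right]
  exact areaForm_swap _ _ _ _

lemma flux_a_pow (n : ℕ) : flux (BS.a p q ^ n) = if q ∣ n then (n : ℝ) else 0 := by
  have hstate := state_mul_a_pow (1 : BS p q) n
  simp only [one_mul, state_one, zpow_zero, mul_one, zero_add] at hstate
  simp [flux_eq, hstate, gate_zero_natCast]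

lemma pathSum_form_replicate_aLetter (g : BS p q) (k : ℕ) :
    pathSum (form p q) g (List.replicate k (aLetter p q)) = 0 := by
  induction k generalizing g with
  | zero => rfl
  | succ k ih =>
    rw [List.replicate_succ, pathSum_cons, ih, val_aLetter, form_mul_a, add_zero]

lemma pathSum_form_powWord_succ {i : ℕ} {g : BS p q}
    (hg : pathSum (form p q) (g * BS.t p q) (powWord p q i) = 0) :
    pathSum (form p q) g (powWord p q (i + 1)) =
      flux g - flux (g * BS.a p q ^ powExp p q (i + 1)) := by
  rw [← eval_powWord (i + 1), powWord]
  generalize hpad : List.replicate _ (aLetter p q) = pad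
  have hpad_sum (k : BS p q) : pathSum (form p q) k pad = 0 :=
    hpad ▸ pathSum_form_replicate_aLetter k _
  simp only [pathSum_cons, pathSum_append, pathSum_nil, eval_cons, eval_append, eval_nil,
    val_tLetter, val_invTLetter, hg, hpad_sum, form_mul_inv_t, ← mul_assoc, mul_one, form_mul_t]
  ring

lemma pathSum_form_powWord_eq_zero (i : ℕ) {g : BS p q} (hg : 0 < (state g).level) :
    pathSum (form p q) g (powWord p q i) = 0 := by
  induction i generalizing g with
  | zero => exact pathSum_form_replicate_aLetter g 1
  | succ i ih =>
    have hflux {k : BS p q} (hk : 0 < (state k).level) : flux k = 0 := by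
      rw [flux_eq, gate_of_ne_zero hk.ne', mul_zero]
    rw [pathSum_form_powWord_succ (ih (by rw [state_mul_t]; exact hg.trans (lt_add_one _))),
      hflux hg, hflux (by rwa [state_mul_a_pow]), sub_zero]

lemma pathSum_form_cons_powWord_sub (hq : 1 < q) (i : ℕ) :
    pathSum (form p q) 1 (aLetter p q :: powWord p q (i + 1)) -
      pathSum (form p q) 1 (powWord p q (i + 1) ++ [aLetter p q]) = powExp p q (i + 1) := by
  have hlift (n : ℕ) : pathSum (form p q) (BS.a p q ^ n * BS.t p q) (powWord p q i) = 0 :=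
    pathSum_form_powWord_eq_zero i <| by
      rw [state_mul_t, ← one_mul (BS.a p q ^ n), state_mul_a_pow, state_one]
      exact zero_lt_one
  have hsum (n : ℕ) : pathSum (form p q) (BS.a p q ^ n) (powWord p q (i + 1)) =
      flux (BS.a p q ^ n) - flux (BS.a p q ^ (n + powExp p q (i + 1))) := by
    rw [pathSum_form_powWord_succ (hlift n), pow_add]
  have hsum₀ := hsum 0
  have hsum₁ := hsum 1
  have hndvd : ¬ q ∣ 1 := by rw [Nat.dvd_one]; exact hq.ne'
  have hndvd' : ¬ q ∣ 1 + powExp p q (i + 1) := fun h =>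
    hndvd ((Nat.dvd_add_left (dvd_powExp_succ i)).1 h)
  rw [flux_a_pow, flux_a_pow, if_neg hndvd, if_neg hndvd', pow_one] at hsum₁
  rw [flux_a_pow, flux_a_pow, zero_add, if_pos (dvd_powExp_succ i), if_pos (dvd_zero q),
    pow_zero] at hsum₀
  simp only [pathSum_cons, pathSum_append, pathSum_nil, val_aLetter, form_mul_a, one_mul, hsum₀]
  have ha := form_mul_a (1 : BS p q)
  rw [one_mul] at ha
  rw [hsum₁, ha]
  simp

end Words

section Deviation

open Filter

variable [NeZero p] [NeZero q] {L : Language (Alph (gens p q))}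
  {ψ : List (Alph (gens p q)) → BS p q}

lemma exists_div_pow_le_of_deviationLE (hψ : IsCayleyAutomaticRep (gens p q) L ψ) (hpq : p < q) :
    ∃ C : ℕ, ∀ i l n h : ℕ, 2 * ((p + 1) * (i + 1) + 2) ≤ l → C * (l + 2) ≤ n →
      DeviationLE L ψ n h → ∀ m, 4 * (C + h + 1) ≤ m →
        (q / p : ℝ) ^ (i + 1) ≤ l * ((n + 2) * (m * (m * (q / p : ℝ) ^ m))) := by
  obtain ⟨C, hC⟩ := hψ.exists_abs_pathSum_sub_le (Set.toFinite _) closure_gens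
  refine ⟨C, fun i l n h hl hn hdev m hm => ?_⟩
  have hq : 1 < q := (Nat.one_le_iff_ne_zero.2 (NeZero.ne p)).trans_lt hpq
  have hlen := length_powWord_le (p := p) (q := q) (i + 1)
  have hfill := hC (form p q) n h l _ (areaForm_swap _ _) hn hdev
    ((loopBound_form hpq.le m).anti hm) _ _ (eval_cons_powWord (i + 1))
    (by simp only [List.length_cons, List.length_append, List.length_nil]; omega)
  rw [pathSum_form_cons_powWord_sub hq, Nat.abs_cast] at hfill
  exact (div_pow_le_powExp (i + 1)).trans hfill

lemma exists_eventually_lt_cayleyDist (hψ : IsCayleyAutomaticRep (gens p q) L ψ) (hpq : p < q) :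
    ∃ E : ℕ, 0 < E ∧ ∀ᶠ k : ℕ in atTop, ∃ w ∈ L, w.length ≤ E * k ∧
      k < 4 * cayleyDist (gens p q) (eval (gens p q) w) (ψ w) := by
  obtain ⟨C, hC⟩ := exists_div_pow_le_of_deviationLE hψ hpq
  have hp : (0 : ℝ) < p := by exact_mod_cast NeZero.pos p
  set θ : ℝ := q / p
  have hθ : 1 < θ := (one_lt_div hp).2 (by exact_mod_cast hpq)
  let E := C * (6 * p + 12) + 1
  let K : ℝ := (6 * p + 10) * (E + 2) * (4 * C + 5) ^ 2 * θ ^ (4 * (C + 1))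
  refine ⟨E, Nat.succ_pos _, ?_⟩
  filter_upwards [eventually_ge_atTop 1, eventually_mul_pow_lt_pow hθ K 4] with k hk hlt
  by_contra! hclose
  have hdev : DeviationLE L ψ (E * k) (k / 4) := fun w hw hlen => by
    have := hclose w hw hlen
    omega
  have hn : C * ((6 * p + 10) * k + 2) ≤ E * k :=
    calc C * ((6 * p + 10) * k + 2) ≤ C * ((6 * p + 12) * k) := by gcongr; linarith
      _ = C * (6 * p + 12) * k := (mul_assoc _ _ _).symm
      _ ≤ E * k := Nat.mul_le_mul_right k (Nat.le_succ _)
  let m := k + 4 * (C + 1)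
  have hfill := hC (2 * k) ((6 * p + 10) * k) (E * k) (k / 4) (by nlinarith) hn hdev m (by omega)
  have hm : m ≤ (4 * C + 5) * k := by simp only [m]; nlinarith
  refine hlt.not_ge (le_of_mul_le_mul_right ?_ (pow_pos (zero_lt_one.trans hθ) k))
  calc θ ^ k * θ ^ k = θ ^ (2 * k) := by rw [← pow_add, two_mul]
    _ ≤ θ ^ (2 * k + 1) := pow_le_pow_right₀ hθ.le (Nat.le_succ _)
    _ ≤ ((6 * p + 10) * k : ℕ) * (((E * k : ℕ) + 2) * (m * (m * θ ^ m))) := hfill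
    _ ≤ ((6 * p + 10) * k : ℕ) * (((E + 2) * k : ℕ) * (((4 * C + 5) * k : ℕ) *
          (((4 * C + 5) * k : ℕ) * θ ^ m))) := by
        gcongr
        exact_mod_cast (by nlinarith : E * k + 2 ≤ (E + 2) * k)
    _ = K * k ^ 4 * θ ^ k := by
        simp only [m, pow_add]
        push_cast [K]
        ring

theorem exists_eventually_le_mul_cayleyDist (hψ : IsCayleyAutomaticRep (gens p q) L ψ)
    (hpq : p < q) :
    ∃ D : ℕ, 0 < D ∧ ∀ᶠ n : ℕ in atTop, ∃ w ∈ L, w.length ≤ n ∧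
      n ≤ D * cayleyDist (gens p q) (eval (gens p q) w) (ψ w) := by
  obtain ⟨E, hE, hk⟩ := exists_eventually_lt_cayleyDist hψ hpq
  refine ⟨4 * E, by positivity, ?_⟩
  filter_upwards [(Nat.tendsto_div_const_atTop hE.ne').eventually hk] with n ⟨w, hw, hlen, hlt⟩
  refine ⟨w, hw, hlen.trans (Nat.mul_div_le n E), ?_⟩
  calc n ≤ E * (n / E + 1) := (Nat.lt_mul_div_succ n hE).le
    _ ≤ E * (4 * cayleyDist (gens p q) (eval (gens p q) w) (ψ w)) := by gcongr; exact hlt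
    _ = 4 * E * cayleyDist (gens p q) (eval (gens p q) w) (ψ w) := by ring

end Deviation

end BS

end CAG

open CAG in
theorem BS_not_mem_classB_of_prec_ident_general (p q : ℕ) (hp : 1 ≤ p) (hpq : p < q)
    (f : FFun) (hf : ¬ identF.Preceq f) :
    ¬ InB ({BS.a p q, BS.t p q} : Set (BS p q)) f := by
  rintro ⟨L, ψ, hψ, K, M, N, hK, hM, hN, hQ, hle⟩
  have : NeZero p := ⟨by omega⟩
  have : NeZero q := ⟨by omega⟩
  obtain ⟨D, hD, hlower⟩ := BS.exists_eventually_le_mul_cayleyDist hψ hpq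
  obtain ⟨n₀, hn₀⟩ := Filter.eventually_atTop.1 hlower
  refine hf ⟨D * K, M, max N n₀, by positivity, hM, by positivity, le_max_of_le_left hN,
    le_max_of_le_left hQ, fun n hn => ?_⟩
  obtain ⟨w, hw, hlen, hnD⟩ := hn₀ n (le_of_max_le_right hn)
  calc (n : ℝ) ≤ D * cayleyDist (BS.gens p q) (eval (BS.gens p q) w) (ψ w) := by
        exact_mod_cast hnD
    _ ≤ D * (K * f.toFun (M * n)) := by gcongr; exact hle n (le_of_max_le_left hn) w hw hlen
    _ = (D * K : ℕ) * f.toFun (M * n) := by push_cast; ring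

open CAG in
/-- For `1 ≤ p < q` and every `f ∈ 𝔉` with `f ≺ 𝔦` (where `𝔦(n) = n`), the Baumslag–Solitar
group `BS(p,q)` does not belong to the class `ℬ_f`. -/
theorem BS_not_mem_classB_of_prec_ident (p q : ℕ) (hp : 1 ≤ p) (hpq : p < q)
    (f : FFun) (hf : f.Prec identF) :
    ¬ InB ({BS.a p q, BS.t p q} : Set (BS p q)) f :=
  BS_not_mem_classB_of_prec_ident_general p q hp hpq f fun h => hf.2 ⟨hf.1, h⟩
end

section
/- The lamplighter group ℤ₂ ≀ ℤ belongs to the class ℬ_𝔦, where 𝔦 is the identity function 𝔦(n) = n. -/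
namespace CAG

/-- Configurations of lamps: finitely supported functions `ℤ → ℤ₂`. -/
abbrev Lamps := ℤ →₀ ZMod 2

/-- Shift of a lamp configuration by `m`. -/
noncomputable def lampShift (m : ℤ) (f : Lamps) : Lamps := Finsupp.mapDomain (· + m) f

lemma lampShift_zero (f : Lamps) : lampShift 0 f = f := by
  simp only [lampShift, add_zero]
  exact Finsupp.mapDomain_id

lemma lampShift_lampShift (m m' : ℤ) (f : Lamps) :
    lampShift m (lampShift m' f) = lampShift (m' + m) f := by
  rw [lampShift, lampShift, lampShift, ← Finsupp.mapDomain_comp]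
  congr 1
  funext x
  simp [add_assoc]

lemma lampShift_add (m : ℤ) (f g : Lamps) :
    lampShift m (f + g) = lampShift m f + lampShift m g :=
  Finsupp.mapDomain_add

/-- The lamplighter group `ℤ₂ ≀ ℤ = (⊕_{i ∈ ℤ} ℤ₂) ⋊ ℤ`: elements are pairs `(f, m)` of a
finitely supported lamp configuration `f : ℤ → ℤ₂` and the lamplighter position `m ∈ ℤ`,
with `ℤ` acting on the lamp configurations by shift. -/
def Lamplighter := Lamps × ℤ

noncomputable instance : Mul Lamplighter :=
  ⟨fun g h => (g.1 + lampShift g.2 h.1, g.2 + h.2)⟩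

instance : One Lamplighter := ⟨((0 : Lamps), (0 : ℤ))⟩

noncomputable instance : Inv Lamplighter := ⟨fun g => (lampShift (-g.2) g.1, -g.2)⟩

lemma Lamplighter.mul_def (g h : Lamplighter) :
    g * h = (g.1 + lampShift g.2 h.1, g.2 + h.2) := rfl

lemma Lamplighter.one_def : (1 : Lamplighter) = ((0 : Lamps), (0 : ℤ)) := rfl

lemma Lamplighter.inv_def (g : Lamplighter) : g⁻¹ = (lampShift (-g.2) g.1, -g.2) := rfl

noncomputable instance : Group Lamplighter where
  mul_assoc a b c := by
    rw [Lamplighter.mul_def, Lamplighter.mul_def, Lamplighter.mul_def, Lamplighter.mul_def]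
    refine Prod.ext ?_ (add_assoc _ _ _)
    show (a.1 + lampShift a.2 b.1) + lampShift (a.2 + b.2) c.1
        = a.1 + lampShift a.2 (b.1 + lampShift b.2 c.1)
    rw [lampShift_add, lampShift_lampShift, add_comm a.2 b.2, add_assoc]
  one_mul a := by
    rw [Lamplighter.mul_def, Lamplighter.one_def]
    refine Prod.ext ?_ (zero_add _)
    show (0 : Lamps) + lampShift 0 a.1 = a.1
    rw [lampShift_zero, zero_add]
  mul_one a := by
    rw [Lamplighter.mul_def, Lamplighter.one_def]
    refine Prod.ext ?_ (add_zero _)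
    show a.1 + lampShift a.2 (0 : Lamps) = a.1
    rw [lampShift, Finsupp.mapDomain_zero, add_zero]
  inv_mul_cancel a := by
    rw [Lamplighter.mul_def, Lamplighter.inv_def, Lamplighter.one_def]
    refine Prod.ext ?_ (neg_add_cancel _)
    show lampShift (-a.2) a.1 + lampShift (-a.2) a.1 = (0 : Lamps)
    ext i
    have h2 : ∀ x : ZMod 2, x + x = 0 := by decide
    simp [h2]

/-- The generator `a` of the lamplighter group: the lamp at the origin is lit, the
lamplighter points at the origin. -/
noncomputable def Lamplighter.a : Lamplighter := (Finsupp.single 0 1, 0)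

/-- The generator `t` of the lamplighter group: all lamps unlit, the lamplighter
points at position `1`. -/
def Lamplighter.t : Lamplighter := ((0 : Lamps), 1)

end CAG

/-!
Number the cells of the line in the order `0, -1, 1, -2, 2, …`. An element `(f, m)` becomes a tape
of lamps with a cursor in front of the cell `m`, and this tape becomes a word in which `t` is an
unlit lamp, `a` is a lit lamp and `t⁻¹` is the cursor. Multiplication by `a` flips the lamp behind
the cursor; multiplication by `t` moves the cursor over two lamps, in a direction given by the
parity of its position, or over one lamp if it stands in front of the cell `-1`. Both relations
rewrite a bounded factor of the word in a regular context, hence they are regular.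

A word `w` of length `n` describes an element whose lit lamps and lamplighter are within the
distance `n` of the origin. The lamplighter reaches it by going to `-n`, lighting the lamps on the
way to `n` and going back to its place, so it has length `O(n)`, like `π(w)`.
-/

namespace CAG

section RegularLanguages

variable {α β : Type*}

theorem isRegular_of_forall_mem_iff {L M : Language α} (hL : L.IsRegular)
    (h : ∀ w, w ∈ M ↔ w ∈ L) : M.IsRegular :=
  Language.ext h ▸ hL

-- Myhill–Nerode: every left quotient of `L` is the union of a subset of the finite set `F`.
theorem isRegular_of_leftQuotients_covered {L : Language α} {F : Set (Language α)}
    (hF : F.Finite) (hL : ∀ x, ∃ S ⊆ F, ∀ w, x ++ w ∈ L ↔ ∃ Q ∈ S, w ∈ Q) : L.IsRegular := by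
  refine .of_finite_range_leftQuotient ((hF.finite_subsets.image sSup).subset ?_)
  rintro _ ⟨x, rfl⟩
  obtain ⟨S, hSF, hS⟩ := hL x
  exact ⟨S, hSF, Language.ext fun w => (hS w).symm⟩

theorem isRegular_of_finite {L : Language α} (hL : Set.Finite (L : Set (List α))) :
    L.IsRegular := by
  have suffixes_finite : (⋃ w ∈ L, {y | y ∈ w.tails}).Finite :=
    hL.biUnion fun w _ => w.tails.finite_toSet
  refine isRegular_of_leftQuotients_covered
    (suffixes_finite.image fun y => (Set.singleton y : Language α)) fun x =>
    ⟨(fun y => Set.singleton y) '' {y | x ++ y ∈ L}, Set.image_mono fun y hy => ?_, fun w => ?_⟩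
  · exact Set.mem_biUnion hy ((List.mem_tails _ _).2 (List.suffix_append x y))
  · exact ⟨fun h => ⟨_, ⟨w, h, rfl⟩, rfl⟩, fun ⟨_, ⟨y, hy, hQ⟩, hw⟩ => by
      subst hQ; obtain rfl : w = y := hw; exact hy⟩

theorem isRegular_mul {L M : Language α} (hL : L.IsRegular) (hM : M.IsRegular) :
    (L * M).IsRegular := by
  refine isRegular_of_leftQuotients_covered
    ((hL.finite_range_leftQuotient.image (· * M)).union hM.finite_range_leftQuotient)
    fun x => ⟨insert (L.leftQuotient x * M)
      {Q | ∃ y ∈ L, ∃ z, y ++ z = x ∧ M.leftQuotient z = Q}, ?_, fun w => ⟨?_, ?_⟩⟩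
  · rintro _ (rfl | ⟨y, -, z, -, rfl⟩)
    · exact .inl (Set.mem_image_of_mem _ ⟨x, rfl⟩)
    · exact .inr ⟨z, rfl⟩
  · rintro ⟨y, hy, z, hz, hyz⟩
    obtain ⟨r, rfl, rfl⟩ | ⟨r, rfl, rfl⟩ := List.append_eq_append_iff.1 hyz
    · exact ⟨_, .inr ⟨y, hy, r, rfl, rfl⟩, hz⟩
    · exact ⟨_, .inl rfl, Language.append_mem_mul hy hz⟩
  · rintro ⟨_, rfl | ⟨y, hy, z, rfl, rfl⟩, hw⟩
    · obtain ⟨r, hr, s, hs, rfl⟩ := hw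
      exact List.append_assoc x r s ▸ Language.append_mem_mul hr hs
    · exact List.append_assoc y z w ▸ Language.append_mem_mul hy hw

theorem isRegular_map (f : α → β) {L : Language α} (hL : L.IsRegular) :
    (Language.map f L).IsRegular := by
  refine isRegular_of_leftQuotients_covered
    (hL.finite_range_leftQuotient.image (Language.map f))
    fun x => ⟨(fun y => Language.map f (L.leftQuotient y)) '' {y | y.map f = x}, ?_,
      fun w => ⟨?_, ?_⟩⟩
  · rintro _ ⟨y, -, rfl⟩
    exact Set.mem_image_of_mem _ ⟨y, rfl⟩
  · rintro ⟨v, hv, hvw⟩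
    obtain ⟨y, z, rfl, rfl, rfl⟩ := List.map_eq_append_iff.1 hvw
    exact ⟨_, ⟨y, rfl, rfl⟩, z, hv, rfl⟩
  · rintro ⟨_, ⟨y, rfl, rfl⟩, z, hz, rfl⟩
    exact ⟨y ++ z, hz, List.map_append⟩

theorem isRegular_top : (⊤ : Language α).IsRegular :=
  compl_bot (α := Language α) ▸ (isRegular_of_finite Set.finite_empty).compl

/-- The language of the words whose length has the property `p`. -/
def lengthLanguage (α : Type*) (p : ℕ → Prop) : Language α := {w | p w.length}

theorem isRegular_lengthLanguage_even : (lengthLanguage α Even).IsRegular := by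
  refine isRegular_of_leftQuotients_covered
    (Set.finite_range fun p : Prop => lengthLanguage α fun n => Even n ↔ p)
    fun x => ⟨{lengthLanguage α fun n => Even n ↔ Even x.length},
      Set.singleton_subset_iff.2 ⟨_, rfl⟩, fun w => ?_⟩
  simp only [Set.mem_singleton_iff, exists_eq_left]
  change Even (x ++ w).length ↔ (Even w.length ↔ Even x.length)
  rw [List.length_append, Nat.even_add]
  exact iff_comm

theorem isRegular_lengthLanguage_odd : (lengthLanguage α Odd).IsRegular :=
  isRegular_of_forall_mem_iff isRegular_lengthLanguage_even.compl
    fun _ => Nat.not_even_iff_odd.symm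

theorem IsRegularRel.union {R S : Set (List α × List α)} (hR : IsRegularRel R)
    (hS : IsRegularRel S) : IsRegularRel (R ∪ S) :=
  isRegular_of_forall_mem_iff (hR.add hS) fun _ =>
    ⟨fun ⟨p, hp, hw⟩ => hp.imp (⟨p, ·, hw⟩) (⟨p, ·, hw⟩),
      fun h => h.elim (fun ⟨p, hp, hw⟩ => ⟨p, .inl hp, hw⟩) fun ⟨p, hp, hw⟩ => ⟨p, .inr hp, hw⟩⟩

end RegularLanguages

section Convolution

variable {α : Type*}

theorem conv_self (x : List α) : conv x x = x.map fun a => (some a, some a) := by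
  induction x with
  | nil => rw [conv, List.map_nil]
  | cons a x ih => rw [conv, ih, List.map_cons]

/-- The language of the convolutions `x ⊗ x` with `x ∈ L`. -/
def diagonal (L : Language α) : Language (Option α × Option α) :=
  Language.map (fun a => (some a, some a)) L

theorem conv_self_mem_diagonal {L : Language α} {x : List α} (hx : x ∈ L) :
    conv x x ∈ diagonal L :=
  ⟨x, hx, (conv_self x).symm⟩

theorem exists_conv_self_eq_of_mem_diagonal {L : Language α} {w : List (Option α × Option α)}
    (hw : w ∈ diagonal L) : ∃ x ∈ L, conv x x = w := by
  obtain ⟨x, hx, rfl⟩ := hw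
  exact ⟨x, hx, conv_self x⟩

theorem isRegular_diagonal {L : Language α} (hL : L.IsRegular) : (diagonal L).IsRegular :=
  isRegular_map _ hL

theorem conv_append {x y : List α} (hxy : x.length = y.length) (x' y' : List α) :
    conv (x ++ x') (y ++ y') = conv x y ++ conv x' y' := by
  induction x generalizing y with
  | nil =>
    obtain rfl := List.length_eq_zero_iff.1 hxy.symm
    rw [conv, List.nil_append, List.nil_append, List.nil_append]
  | cons a x ih =>
    obtain _ | ⟨b, y⟩ := y
    · cases hxy
    · simp only [List.cons_append, conv, ih (Nat.succ.inj hxy)]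

end Convolution

section Trimming

variable {β : Type*} [Zero β] [DecidableEq β]

/-- Remove the trailing zeros of a list; trimmed lists represent finitely supported sequences
uniquely. -/
def trim (v : List β) : List β := v.rdropWhile (· = 0)

theorem trim_append_zero (v : List β) : trim (v ++ [0]) = trim v :=
  List.rdropWhile_concat_pos _ _ _ (decide_eq_true rfl)

theorem trim_append_singleton_of_ne_zero (v : List β) {x : β} (hx : x ≠ 0) :
    trim (v ++ [x]) = v ++ [x] :=
  List.rdropWhile_concat_neg _ _ _ (by simpa using hx)

theorem trim_trim (v : List β) : trim (trim v) = trim v := List.rdropWhile_idempotent _ _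

theorem trim_append_replicate_zero (v : List β) (k : ℕ) :
    trim (v ++ List.replicate k 0) = trim v := by
  induction k with
  | zero => rw [List.replicate_zero, List.append_nil]
  | succ k ih => rw [List.replicate_succ', ← List.append_assoc, trim_append_zero, ih]

theorem exists_trim_append_replicate_zero (v : List β) :
    ∃ k, trim v ++ List.replicate k 0 = v := by
  induction v using List.reverseRecOn with
  | nil => exact ⟨0, rfl⟩
  | append_singleton v x ih =>
    by_cases hx : x = 0
    · obtain ⟨k, hk⟩ := ih
      exact ⟨k + 1, by rw [hx, trim_append_zero, List.replicate_succ', ← List.append_assoc, hk]⟩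
    · exact ⟨0, by rw [trim_append_singleton_of_ne_zero v hx, List.replicate_zero, List.append_nil]⟩

theorem trim_append (p v : List β) :
    trim (p ++ v) = if trim v = [] then trim p else p ++ trim v := by
  induction v using List.reverseRecOn with
  | nil => rw [List.append_nil, if_pos]; rfl
  | append_singleton v x ih =>
    by_cases hx : x = 0
    · simp only [hx, ← List.append_assoc, trim_append_zero, ih]
    · rw [← List.append_assoc, trim_append_singleton_of_ne_zero _ hx,
        trim_append_singleton_of_ne_zero v hx,
        if_neg (List.append_ne_nil_of_right_ne_nil _ (List.cons_ne_nil _ _)), List.append_assoc]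

/-- The language of the nonempty trimmed words, that is, of the words ending in a nonzero letter. -/
def nonzeroLast (β : Type*) [Zero β] [DecidableEq β] : Language β := {v | v ≠ [] ∧ trim v = v}

theorem mem_nonzeroLast {v : List β} : v ∈ nonzeroLast β ↔ ∃ u x, x ≠ 0 ∧ u ++ [x] = v := by
  constructor
  · rintro ⟨hv, htrim⟩
    have hlast := List.rdropWhile_eq_self_iff.1 htrim hv
    exact ⟨_, _, by simpa using hlast, List.dropLast_append_getLast hv⟩
  · rintro ⟨u, x, hx, rfl⟩
    exact ⟨List.append_ne_nil_of_right_ne_nil _ (List.cons_ne_nil _ _),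
      trim_append_singleton_of_ne_zero u hx⟩

theorem isRegular_nonzeroLast [Finite β] : (nonzeroLast β).IsRegular := by
  have letters : Set.Finite {w : List β | ∃ x ≠ 0, [x] = w} :=
    (Set.toFinite {x : β | x ≠ 0}).image fun x => [x]
  refine isRegular_of_forall_mem_iff (isRegular_mul isRegular_top (isRegular_of_finite letters))
    fun v => mem_nonzeroLast.trans ⟨?_, ?_⟩
  · rintro ⟨u, x, hx, rfl⟩
    exact ⟨u, trivial, [x], ⟨x, hx, rfl⟩, rfl⟩
  · rintro ⟨u, -, _, ⟨x, hx, rfl⟩, rfl⟩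
    exact ⟨u, x, hx, rfl⟩

end Trimming

section Configurations

variable {α β : Type*}

/-- A tape with a cursor between two cells: the word to the left of the cursor and the word to the
right of it. -/
abbrev Config (β : Type*) := List β × List β

/-- The configuration `c` with the words `u` and `v` added at its two ends. -/
def Config.inContext (u v : List β) (c : Config β) : Config β := (u ++ c.1, c.2 ++ v)

/-- The word over `α` which spells the tape of `c` by `b`, with the letter `s` for the cursor. -/
def cursorWord (b : β → α) (s : α) (c : Config β) : List α := c.1.map b ++ s :: c.2.map b

theorem length_cursorWord (b : β → α) (s : α) (c : Config β) :
    (cursorWord b s c).length = c.1.length + c.2.length + 1 := by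
  simp only [cursorWord, List.length_append, List.length_cons, List.length_map]
  rw [add_assoc]

/-- The moves that apply one of the rules `r.1 → r.2`, `r ∈ P`, to a configuration, in a left
context from `U` and an arbitrary right context. -/
def moves (U : Language β) (P : Set (Config β × Config β)) : Set (Config β × Config β) :=
  {m | ∃ u ∈ U, ∃ r ∈ P, ∃ v, m = (r.1.inContext u v, r.2.inContext u v)}

theorem mem_moves_swap {U : Language β} {P : Set (Config β × Config β)} {m : Config β × Config β} :
    m ∈ moves U (Prod.swap '' P) ↔ m.swap ∈ moves U P := by
  constructor
  · rintro ⟨u, hu, _, ⟨r, hr, rfl⟩, v, rfl⟩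
    exact ⟨u, hu, r, hr, v, rfl⟩
  · rintro ⟨u, hu, r, hr, v, hm⟩
    exact ⟨u, hu, r.swap, ⟨r, hr, rfl⟩, v, Prod.swap_injective hm⟩

/-- The rules that carry the cursor over the next `k` cells. -/
def advanceRules (β : Type*) (k : ℕ) : Set (Config β × Config β) :=
  (fun l => (([], l), (l, []))) '' {l | l.length = k}

theorem finite_advanceRules [Finite β] (k : ℕ) : (advanceRules β k).Finite :=
  (List.finite_length_eq β k).image _

theorem mem_moves_advanceRules {U : Language β} {k : ℕ} {m : Config β × Config β} :
    m ∈ moves U (advanceRules β k) ↔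
      m.1.1 ∈ U ∧ m.2.1.length = m.1.1.length + k ∧ m.1.1 ++ m.1.2 = m.2.1 ++ m.2.2 := by
  constructor
  · rintro ⟨u, hu, _, ⟨l, rfl, rfl⟩, v, rfl⟩
    simpa only [Config.inContext, List.append_nil, List.nil_append, List.length_append,
      List.append_assoc, and_true] using hu
  · obtain ⟨⟨u, w⟩, ⟨u', w'⟩⟩ := m
    rintro ⟨hu, hlength, htape⟩
    obtain ⟨l, rfl⟩ : u <+: u' := List.prefix_of_prefix_length_le (List.prefix_append u w)
      (htape ▸ List.prefix_append u' w') (hlength ▸ Nat.le_add_right _ _)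
    obtain rfl : w = l ++ w' := List.append_cancel_left (htape.trans (List.append_assoc u l w'))
    refine ⟨u, hu, _, ⟨l, ?_, rfl⟩, w', ?_⟩
    · exact Nat.add_left_cancel (List.length_append ▸ hlength)
    · simp only [Config.inContext, List.append_nil, List.nil_append]

variable [Zero β] [DecidableEq β]

/-- The word spelling a configuration, up to trailing zeros to the right of the cursor. -/
def encode (b : β → α) (s : α) (c : Config β) : List α := cursorWord b s (c.1, trim c.2)

theorem encode_eq_encode_iff {b : β → α} {s : α} (hb : b.Injective) (hs : s ∉ Set.range b)
    {c c' : Config β} : encode b s c = encode b s c' ↔ c.1 = c'.1 ∧ trim c.2 = trim c'.2 := by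
  have cursor_notMem (v : List β) : s ∉ v.map b := fun h =>
    hs ((List.mem_map.1 h).imp fun _ => And.right)
  simp only [encode, cursorWord, hb.list_map.eq_iff, true_and,
    List.append_cons_inj_of_notMem (cursor_notMem _) (cursor_notMem _)]

theorem encode_inContext_of_trim_eq_nil (b : β → α) (s : α) (u : List β) {v : List β}
    (hv : trim v = []) (c : Config β) :
    encode b s (c.inContext u v) = u.map b ++ encode b s c := by
  simp only [encode, cursorWord, Config.inContext, trim_append, if_pos hv, List.map_append,
    List.append_assoc]

theorem encode_inContext_of_trim_ne_nil (b : β → α) (s : α) (u : List β) {v : List β}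
    (hv : trim v ≠ []) (c : Config β) :
    encode b s (c.inContext u v) = u.map b ++ (cursorWord b s c ++ (trim v).map b) := by
  simp only [encode, cursorWord, Config.inContext, trim_append, if_neg hv, List.map_append,
    List.append_assoc, List.cons_append]

theorem isRegular_range_trim [Finite β] : Language.IsRegular (Set.range (trim (β := β))) := by
  refine isRegular_of_forall_mem_iff
    ((isRegular_of_finite (Set.finite_singleton [])).add isRegular_nonzeroLast)
    fun v => ⟨?_, ?_⟩
  · rintro ⟨v, rfl⟩
    exact or_iff_not_imp_left.2 fun hv => ⟨hv, trim_trim v⟩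
  · rintro (rfl | hv)
    exacts [⟨[], rfl⟩, ⟨v, hv.2⟩]

theorem isRegular_range_encode [Finite β] (b : β → α) (s : α) :
    Language.IsRegular (Set.range (encode b s)) := by
  refine isRegular_of_forall_mem_iff
    (isRegular_mul (isRegular_map b isRegular_top) (isRegular_mul
      (isRegular_of_finite (Set.finite_singleton [s])) (isRegular_map b isRegular_range_trim)))
    fun w => ⟨?_, ?_⟩
  · rintro ⟨c, rfl⟩
    exact ⟨_, ⟨c.1, trivial, rfl⟩, _, ⟨[s], rfl, _, ⟨_, ⟨c.2, rfl⟩, rfl⟩, rfl⟩, rfl⟩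
  · rintro ⟨_, ⟨u, -, rfl⟩, _, ⟨_, rfl, _, ⟨_, ⟨v, rfl⟩, rfl⟩, rfl⟩, rfl⟩
    exact ⟨(u, v), rfl⟩

theorem conv_encode_inContext_of_trim_eq_nil (b : β → α) (s : α) (u : List β) {v : List β}
    (hv : trim v = []) (c c' : Config β) :
    conv (encode b s (c.inContext u v)) (encode b s (c'.inContext u v)) =
      conv (u.map b) (u.map b) ++ conv (encode b s c) (encode b s c') := by
  rw [encode_inContext_of_trim_eq_nil b s u hv, encode_inContext_of_trim_eq_nil b s u hv,
    conv_append rfl]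

theorem conv_encode_inContext_of_trim_ne_nil (b : β → α) (s : α) (u : List β) {v : List β}
    (hv : trim v ≠ []) {c c' : Config β}
    (hlength : c.1.length + c.2.length = c'.1.length + c'.2.length) :
    conv (encode b s (c.inContext u v)) (encode b s (c'.inContext u v)) =
      conv (u.map b) (u.map b) ++ (conv (cursorWord b s c) (cursorWord b s c') ++
        conv ((trim v).map b) ((trim v).map b)) := by
  rw [encode_inContext_of_trim_ne_nil b s u hv, encode_inContext_of_trim_ne_nil b s u hv,
    conv_append rfl, conv_append (by rw [length_cursorWord, length_cursorWord, hlength])]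

-- Trimming stays inside the right context `v` if `v` has a nonzero cell. Otherwise it deletes `v`
-- and may cut into the two sides of the rule, which then stand at the ends of the two words.
theorem isRegularRel_encode_moves [Finite β] (b : β → α) (s : α) {U : Language β}
    {P : Set (Config β × Config β)} (hU : U.IsRegular) (hP : P.Finite)
    (hlength : ∀ r ∈ P, r.1.1.length + r.1.2.length = r.2.1.length + r.2.2.length) :
    IsRegularRel (Prod.map (encode b s) (encode b s) '' moves U P) := by
  have prefixes := isRegular_diagonal (isRegular_map b hU)
  have rulesBeforeSuffix := isRegular_mul
    (isRegular_of_finite (hP.image fun r => conv (cursorWord b s r.1) (cursorWord b s r.2)))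
    (isRegular_diagonal (isRegular_map b isRegular_nonzeroLast))
  have rulesAtEnd := isRegular_of_finite
    (hP.image fun r => conv (encode b s r.1) (encode b s r.2))
  refine isRegular_of_forall_mem_iff (isRegular_mul prefixes (rulesBeforeSuffix.add rulesAtEnd))
    fun w => ⟨?_, fun hw => ?_⟩
  · rintro ⟨_, ⟨_, ⟨u, hu, r, hr, v, rfl⟩, rfl⟩, rfl⟩
    have hu' := conv_self_mem_diagonal (Set.mem_image_of_mem (List.map b) hu)
    by_cases hv : trim v = []
    · exact ⟨_, hu', _, .inr ⟨r, hr, rfl⟩,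
        (conv_encode_inContext_of_trim_eq_nil b s u hv r.1 r.2).symm⟩
    · exact ⟨_, hu', _, .inl ⟨_, ⟨r, hr, rfl⟩, _,
        conv_self_mem_diagonal (Set.mem_image_of_mem _ ⟨hv, trim_trim v⟩), rfl⟩,
        (conv_encode_inContext_of_trim_ne_nil b s u hv (hlength r hr)).symm⟩
  · obtain ⟨_, hu', w', hw', rfl⟩ := hw
    obtain ⟨_, ⟨u, hu, rfl⟩, rfl⟩ := exists_conv_self_eq_of_mem_diagonal hu'
    obtain ⟨_, ⟨r, hr, rfl⟩, _, hv', rfl⟩ | ⟨r, hr, rfl⟩ := hw'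
    · obtain ⟨_, ⟨v, ⟨hne, hv⟩, rfl⟩, rfl⟩ := exists_conv_self_eq_of_mem_diagonal hv'
      have hconv := conv_encode_inContext_of_trim_ne_nil b s u (hv.symm ▸ hne) (hlength r hr)
      rw [hv] at hconv
      exact ⟨_, ⟨_, ⟨u, hu, r, hr, v, rfl⟩, rfl⟩, hconv.symm⟩
    · exact ⟨_, ⟨_, ⟨u, hu, r, hr, [], rfl⟩, rfl⟩,
        (conv_encode_inContext_of_trim_eq_nil b s u rfl r.1 r.2).symm⟩

end Configurations

section Representations

variable {G ι : Type*} [Group G]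

/-- A set of pairs of names, for elements named by `val`, which contains every instance
`g ↦ g * a` of the right multiplication by `a` and nothing else. -/
structure RealizesMul (val : ι → G) (a : G) (T : Set (ι × ι)) : Prop where
  val_snd : ∀ m ∈ T, val m.2 = val m.1 * a
  exists_val_fst : ∀ g, ∃ m ∈ T, val m.1 = g

theorem isCayleyAutomaticRep_extend {A : Set G} {enc : ι → List (Alph A)} {val : ι → G}
    (hval : val.Surjective) (henc : ∀ i j, enc i = enc j ↔ val i = val j)
    (hregular : Language.IsRegular (Set.range enc))
    (hmul : ∀ a ∈ A, ∃ T, RealizesMul val a T ∧ IsRegularRel (Prod.map enc enc '' T)) :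
    IsCayleyAutomaticRep A (Set.range enc) (Function.extend enc val 1) := by
  have extend_enc (i : ι) : Function.extend enc val 1 (enc i) = val i :=
    Function.FactorsThrough.extend_apply (fun i j => (henc i j).1) 1 i
  refine ⟨hregular, ⟨Set.mapsTo_univ _ _, ?_, ?_⟩, fun a ha => ?_⟩
  · rintro _ ⟨i, rfl⟩ _ ⟨j, rfl⟩ hij
    rwa [extend_enc, extend_enc, ← henc] at hij
  · intro g _
    obtain ⟨i, rfl⟩ := hval g
    exact ⟨enc i, ⟨i, rfl⟩, extend_enc i⟩
  · obtain ⟨T, hT, hTregular⟩ := hmul a ha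
    convert hTregular
    refine Set.Subset.antisymm ?_ ?_
    · rintro ⟨_, _⟩ ⟨⟨i, rfl⟩, ⟨j, rfl⟩, hij⟩
      obtain ⟨m, hm, hmi⟩ := hT.exists_val_fst (val i)
      simp only [extend_enc] at hij
      refine ⟨m, hm, Prod.ext ((henc _ _).2 hmi) ((henc _ _).2 ?_)⟩
      rw [hT.val_snd m hm, hmi, hij]
    · rintro _ ⟨m, hm, rfl⟩
      exact ⟨⟨m.1, rfl⟩, ⟨m.2, rfl⟩, by simpa only [Prod.map, extend_enc] using hT.val_snd m hm⟩

end Representations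

section PaddedLists

variable {β : Type*}

theorem toFinsupp_append_replicate_zero [Zero β] [DecidableEq β] (l : List β) (k : ℕ) :
    (l ++ List.replicate k 0).toFinsupp = l.toFinsupp := by
  ext n
  rw [List.toFinsupp_apply, List.toFinsupp_apply]
  obtain hn | hn := lt_or_ge n l.length
  · rw [List.getD_append _ _ _ _ hn]
  · rw [List.getD_append_right _ _ _ _ hn, List.getD_eq_default _ _ hn,
      List.getD_eq_getElem?_getD, List.getElem?_getD_replicate_default_eq]

theorem append_replicate_zero_eq_of_toFinsupp_eq [Zero β] [DecidableEq β] {l l' : List β}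
    (h : l.toFinsupp = l'.toFinsupp) :
    l ++ List.replicate l'.length 0 = l' ++ List.replicate l.length 0 := by
  rw [← toFinsupp_append_replicate_zero l l'.length,
    ← toFinsupp_append_replicate_zero l' l.length] at h
  refine List.ext_getElem
    (by simp only [List.length_append, List.length_replicate, add_comm]) fun n hn hn' => ?_
  rw [← List.toFinsupp_apply_lt _ _ hn, ← List.toFinsupp_apply_lt _ _ hn', h]

theorem toFinsupp_append_add_cons [AddZeroClass β] [DecidableEq β] (u v : List β) (x y : β) :
    (u ++ (x + y) :: v).toFinsupp = (u ++ x :: v).toFinsupp + Finsupp.single u.length y := by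
  ext n
  rw [Finsupp.add_apply, List.toFinsupp_apply, List.toFinsupp_apply]
  obtain hn | rfl | hn := lt_trichotomy n u.length
  · rw [List.getD_append _ _ _ _ hn, List.getD_append _ _ _ _ hn,
      Finsupp.single_eq_of_ne hn.ne, add_zero]
  · simp
  · obtain ⟨k, rfl⟩ := Nat.exists_eq_add_of_lt hn
    rw [Finsupp.single_eq_of_ne hn.ne', add_zero, List.getD_append_right _ _ _ _ hn.le,
      List.getD_append_right _ _ _ _ hn.le, show u.length + k + 1 - u.length = k + 1 by omega,
      List.getD_cons_succ, List.getD_cons_succ]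

theorem exists_toFinsupp_eq [Zero β] [DecidableEq β] (f : ℕ →₀ β) (n : ℕ) :
    ∃ l : List β, n ≤ l.length ∧ l.toFinsupp = f := by
  obtain ⟨N, hN⟩ := f.support.exists_nat_subset_range
  refine ⟨(List.range (max n N)).map f, by simp, ?_⟩
  ext k
  rw [List.toFinsupp_apply]
  obtain hk | hk := lt_or_ge k (max n N)
  · rw [List.getD_eq_getElem _ _ (by simpa using hk), List.getElem_map, List.getElem_range]
  · rw [List.getD_eq_default _ _ (by simpa using hk), eq_comm, ← Finsupp.notMem_support_iff]
    exact fun h => ((le_max_right n N).trans hk).not_gt (Finset.mem_range.1 (hN h))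

end PaddedLists

section LampConfigurations

/-- The element of the lamplighter group with the lamps `f` and the lamplighter at `m`. It keeps
the type `Lamplighter` where a bare pair would have the type `Lamps × ℤ`. -/
def Lamplighter.mk (f : Lamps) (m : ℤ) : Lamplighter := (f, m)

theorem Lamplighter.mk_mul_a (f : Lamps) (m : ℤ) :
    mk f m * a = mk (f + Finsupp.single m 1) m := by
  refine Prod.ext ?_ (add_zero m)
  change f + lampShift m (Finsupp.single 0 1) = f + Finsupp.single m 1
  rw [lampShift, Finsupp.mapDomain_single, zero_add]

theorem Lamplighter.mk_mul_t (f : Lamps) (m : ℤ) : mk f m * t = mk f (m + 1) := by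
  refine Prod.ext ?_ rfl
  change f + lampShift m 0 = f
  rw [lampShift, Finsupp.mapDomain_zero, add_zero]

/-- The cells of the line in the order `0, -1, 1, -2, 2, …`. -/
def cell : ℕ ≃ ℤ := Equiv.intEquivNat.symm

theorem cell_two_mul (n : ℕ) : cell (2 * n) = n := (Equiv.symm_apply_eq _).2 rfl

theorem cell_two_mul_add_one (n : ℕ) : cell (2 * n + 1) = -(n + 1) :=
  (Equiv.symm_apply_eq _).2 rfl

theorem cell_add_two_of_even {n : ℕ} (hn : Even n) : cell (n + 2) = cell n + 1 := by
  obtain ⟨k, rfl⟩ := hn.two_dvd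
  rw [← Nat.mul_succ, cell_two_mul, cell_two_mul, Nat.cast_succ]

theorem cell_eq_add_two_of_odd {n : ℕ} (hn : Odd n) : cell n = cell (n + 2) + 1 := by
  obtain ⟨k, rfl⟩ := hn
  rw [show 2 * k + 1 + 2 = 2 * (k + 1) + 1 by ring, cell_two_mul_add_one, cell_two_mul_add_one]
  push_cast
  ring

theorem abs_cell_le (n : ℕ) : |cell n| ≤ n := by
  obtain ⟨k, rfl | rfl⟩ := n.even_or_odd'
  · rw [cell_two_mul, abs_le]; omega
  · rw [cell_two_mul_add_one, abs_le]; omega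

/-- The lamps whose states are listed by `l` in the order of `cell`. -/
noncomputable def lamps (l : List (ZMod 2)) : Lamps := Finsupp.domCongr cell l.toFinsupp

/-- The element of the lamplighter group with the lamps given by the tape and the lamplighter at
the cell to the right of the cursor. -/
noncomputable def Config.value (c : Config (ZMod 2)) : Lamplighter :=
  .mk (lamps (c.1 ++ c.2)) (cell c.1.length)

theorem value_trim (u v : List (ZMod 2)) : Config.value (u, trim v) = Config.value (u, v) := by
  obtain ⟨k, hk⟩ := exists_trim_append_replicate_zero v
  simp only [Config.value, lamps]
  conv_rhs => rw [← hk, ← List.append_assoc, toFinsupp_append_replicate_zero]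

theorem value_eq_value_iff {c c' : Config (ZMod 2)} :
    c.value = c'.value ↔ c.1 = c'.1 ∧ trim c.2 = trim c'.2 := by
  constructor
  · intro h
    obtain ⟨hlamps, hcell⟩ := Prod.ext_iff.1 h
    have hpad := append_replicate_zero_eq_of_toFinsupp_eq ((Finsupp.domCongr cell).injective hlamps)
    rw [List.append_assoc, List.append_assoc] at hpad
    obtain ⟨hfst, hsnd⟩ := List.append_inj hpad (cell.injective hcell)
    have htrim := congrArg trim hsnd
    rw [trim_append_replicate_zero, trim_append_replicate_zero] at htrim
    exact ⟨hfst, htrim⟩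
  · rintro ⟨hfst, hsnd⟩
    rw [← Prod.eta c, ← Prod.eta c', ← value_trim, hfst, hsnd, value_trim]

theorem exists_value_eq (g : Lamplighter) (n : ℕ) :
    ∃ c : Config (ZMod 2), n ≤ c.2.length ∧ c.value = g := by
  obtain ⟨l, hl, hlg⟩ :=
    exists_toFinsupp_eq ((Finsupp.domCongr cell).symm g.1) (cell.symm g.2 + n)
  refine ⟨(l.take (cell.symm g.2), l.drop (cell.symm g.2)), ?_, ?_⟩
  · rw [List.length_drop]; omega
  · rw [Config.value, List.take_append_drop, List.length_take_of_le (by omega), lamps, hlg,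
      AddEquiv.apply_symm_apply, Equiv.apply_symm_apply]
    rfl

theorem value_mul_a (u v : List (ZMod 2)) (x : ZMod 2) :
    Config.value (u, (x + 1) :: v) = Config.value (u, x :: v) * Lamplighter.a := by
  have hlamps : lamps (u ++ (x + 1) :: v) =
      lamps (u ++ x :: v) + Finsupp.single (cell u.length) 1 := by
    rw [lamps, toFinsupp_append_add_cons, map_add]
    exact congrArg _ (Finsupp.equivMapDomain_single _ _ _)
  rw [Config.value, Config.value, Lamplighter.mk_mul_a, hlamps]

theorem value_mul_t {c c' : Config (ZMod 2)} (htape : c'.1 ++ c'.2 = c.1 ++ c.2)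
    (hcell : cell c'.1.length = cell c.1.length + 1) : c'.value = c.value * Lamplighter.t := by
  rw [Config.value, Config.value, Lamplighter.mk_mul_t, htape, hcell]

/-- The moves that flip the lamp to the right of the cursor. -/
def flipMoves : Set (Config (ZMod 2) × Config (ZMod 2)) :=
  moves ⊤ (Set.range fun x => (([], [x]), ([], [x + 1])))

/-- The moves of the cursor from a cell `z` to `z + 1`. In the order of `cell`, these are two steps
to the right from the cells `z ≥ 0`, two steps to the left from the cells `z < -1` and one
step to the left from the cell `-1`. -/
def stepMoves : Set (Config (ZMod 2) × Config (ZMod 2)) :=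
  moves (lengthLanguage _ Even) (advanceRules _ 2) ∪
    (moves (lengthLanguage _ Odd) (Prod.swap '' advanceRules _ 2) ∪
      moves 1 (Prod.swap '' advanceRules _ 1))

theorem realizesMul_flipMoves : RealizesMul Config.value Lamplighter.a flipMoves where
  val_snd := by
    rintro _ ⟨u, -, _, ⟨x, rfl⟩, v, rfl⟩
    exact value_mul_a _ _ _
  exists_val_fst g := by
    obtain ⟨⟨u, _ | ⟨x, v⟩⟩, hc, rfl⟩ := exists_value_eq g 1
    · cases hc
    · exact ⟨_, ⟨u, trivial, _, ⟨x, rfl⟩, v, rfl⟩, by simp [Config.inContext]⟩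

theorem exists_mem_stepMoves_fst_eq {c : Config (ZMod 2)} (hc : 2 ≤ c.2.length) :
    ∃ m ∈ stepMoves, m.1 = c := by
  let cursorAt (n : ℕ) : Config (ZMod 2) := ((c.1 ++ c.2).take n, (c.1 ++ c.2).drop n)
  have tape_cursorAt (n : ℕ) : (cursorAt n).1 ++ (cursorAt n).2 = c.1 ++ c.2 :=
    List.take_append_drop _ _
  have length_cursorAt {n : ℕ} (hn : n ≤ c.1.length + 2) : (cursorAt n).1.length = n :=
    List.length_take_of_le (by rw [List.length_append]; omega)
  obtain ⟨k, hk | hk⟩ := c.1.length.even_or_odd'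
  · exact ⟨(c, cursorAt (c.1.length + 2)), .inl (mem_moves_advanceRules.2
      ⟨show Even c.1.length from hk ▸ even_two_mul k, length_cursorAt le_rfl,
        (tape_cursorAt _).symm⟩), rfl⟩
  · obtain _ | k := k
    · exact ⟨(c, cursorAt 0), .inr (.inr (mem_moves_swap.2 (mem_moves_advanceRules.2
        ⟨rfl, hk, tape_cursorAt 0⟩))), rfl⟩
    · have hlength := length_cursorAt (n := 2 * k + 1) (by omega)
      exact ⟨(c, cursorAt (2 * k + 1)), .inr (.inl (mem_moves_swap.2 (mem_moves_advanceRules.2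
        ⟨⟨k, hlength⟩, hk.trans (by rw [Prod.fst_swap, hlength]; ring), tape_cursorAt _⟩))), rfl⟩

theorem realizesMul_stepMoves : RealizesMul Config.value Lamplighter.t stepMoves where
  val_snd := by
    rintro m (hm | hm | hm)
    · obtain ⟨heven, hlength, htape⟩ := mem_moves_advanceRules.1 hm
      exact value_mul_t htape.symm (hlength ▸ cell_add_two_of_even heven)
    · obtain ⟨hodd, hlength, htape⟩ := mem_moves_advanceRules.1 (mem_moves_swap.1 hm)
      refine value_mul_t htape ?_
      exact (cell_eq_add_two_of_odd hodd).trans (by rw [← hlength]; rfl)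
    · obtain ⟨hnil, hlength, htape⟩ := mem_moves_advanceRules.1 (mem_moves_swap.1 hm)
      have hfst : m.2.1 = [] := hnil
      refine value_mul_t htape ?_
      rw [show m.1.1.length = 1 by simpa [hfst] using hlength, hfst]
      rfl
  exists_val_fst g := by
    obtain ⟨c, hc, rfl⟩ := exists_value_eq g 2
    obtain ⟨m, hm, rfl⟩ := exists_mem_stepMoves_fst_eq hc
    exact ⟨m, hm, rfl⟩

end LampConfigurations

section WordMetric

variable {G : Type*} [Group G] {A : Set G}

/-- The elements of `G` of word length at most `n`. -/
def cayleyBall (A : Set G) (n : ℕ) : Set G := {g | ∃ w, eval A w = g ∧ w.length ≤ n}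

theorem wordLength_le_of_mem_cayleyBall {g : G} {n : ℕ} (hg : g ∈ cayleyBall A n) :
    wordLength A g ≤ n := by
  obtain ⟨w, hw, hn⟩ := hg
  exact le_trans (Nat.sInf_le (by exact ⟨w, hw, rfl⟩)) hn

theorem one_mem_cayleyBall (n : ℕ) : 1 ∈ cayleyBall A n := ⟨[], rfl, Nat.zero_le n⟩

theorem cayleyBall_mono {m n : ℕ} (hmn : m ≤ n) : cayleyBall A m ⊆ cayleyBall A n :=
  fun _ ⟨w, hw, hm⟩ => ⟨w, hw, hm.trans hmn⟩

theorem mul_mem_cayleyBall {g h : G} {m n : ℕ} (hg : g ∈ cayleyBall A m)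
    (hh : h ∈ cayleyBall A n) : g * h ∈ cayleyBall A (m + n) := by
  obtain ⟨w, rfl, hw⟩ := hg
  obtain ⟨w', rfl, hw'⟩ := hh
  exact ⟨w ++ w', (congrArg List.prod List.map_append).trans List.prod_append,
    List.length_append ▸ Nat.add_le_add hw hw'⟩

theorem mem_cayleyBall_one {g : G} (hg : g ∈ A ∪ A⁻¹) : g ∈ cayleyBall A 1 :=
  ⟨[(⟨g, hg⟩ : {x // x ∈ A ∪ A⁻¹})], List.prod_singleton, le_rfl⟩

theorem inv_eval_mem_cayleyBall (w : List (Alph A)) : (eval A w)⁻¹ ∈ cayleyBall A w.length := by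
  induction w with
  | nil => exact (inv_one (G := G)).symm ▸ one_mem_cayleyBall 0
  | cons x w ih =>
    have hx : x.1⁻¹ ∈ A ∪ A⁻¹ := x.2.symm.imp id Set.inv_mem_inv.2
    have heval : (eval A (x :: w))⁻¹ = (eval A w)⁻¹ * x.1⁻¹ :=
      (congrArg _ List.prod_cons).trans (mul_inv_rev _ _)
    exact heval ▸ mul_mem_cayleyBall ih (mem_cayleyBall_one hx)

theorem inv_mem_cayleyBall {g : G} {n : ℕ} (hg : g ∈ cayleyBall A n) : g⁻¹ ∈ cayleyBall A n := by
  obtain ⟨w, rfl, hw⟩ := hg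
  exact cayleyBall_mono hw (inv_eval_mem_cayleyBall w)

theorem pow_mem_cayleyBall {g : G} (hg : g ∈ cayleyBall A 1) (n : ℕ) : g ^ n ∈ cayleyBall A n := by
  induction n with
  | zero => exact pow_zero g ▸ one_mem_cayleyBall 0
  | succ n ih => exact pow_succ g n ▸ mul_mem_cayleyBall ih hg

theorem zpow_mem_cayleyBall {g : G} (hg : g ∈ cayleyBall A 1) (m : ℤ) :
    g ^ m ∈ cayleyBall A m.natAbs := by
  obtain ⟨n, rfl | rfl⟩ := m.eq_nat_or_neg
  · simpa using pow_mem_cayleyBall hg n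
  · simpa using inv_mem_cayleyBall (pow_mem_cayleyBall hg n)

theorem cayleyDist_eval_le {w : List (Alph A)} {g : G} {n : ℕ} (hg : g ∈ cayleyBall A n) :
    cayleyDist A (eval A w) g ≤ w.length + n :=
  wordLength_le_of_mem_cayleyBall
    (mul_mem_cayleyBall (inv_eval_mem_cayleyBall w) hg)

theorem inB_identF_of_cayleyDist_le {L : Language (Alph A)} {ψ : List (Alph A) → G} {K : ℕ}
    (hψ : IsCayleyAutomaticRep A L ψ) (hK : 0 < K)
    (hdist : ∀ w ∈ L, cayleyDist A (eval A w) (ψ w) ≤ K * w.length) : InB A identF := by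
  refine ⟨L, ψ, hψ, K, 1, 1, hK, one_pos, one_pos, le_rfl, fun n _ w hw hn => ?_⟩
  have hle : cayleyDist A (eval A w) (ψ w) ≤ K * (1 * n) :=
    (hdist w hw).trans (by rw [one_mul]; exact Nat.mul_le_mul_left K hn)
  change _ ≤ (K : ℝ) * ((1 * n : ℕ) : ℝ)
  exact_mod_cast hle

end WordMetric

section LamplighterMetric

theorem Lamplighter.mk_mul_t_zpow (f : Lamps) (m j : ℤ) : mk f m * t ^ j = mk f (m + j) := by
  induction j with
  | zero => rw [zpow_zero, mul_one, add_zero]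
  | succ k ih => rw [zpow_add_one, ← mul_assoc, ih, mk_mul_t, add_assoc]
  | pred k ih =>
    refine mul_right_cancel (b := t) ?_
    rw [mul_assoc, ← zpow_add_one, sub_add_cancel, ih, mk_mul_t, add_assoc, sub_add_cancel]

/-- The element of the lamplighter group which agrees with `f` at the lamps before `k` and has the
lamplighter at `k`. -/
noncomputable def sweep (f : Lamps) (k : ℤ) : Lamplighter := .mk (f.filter (· < k)) k

theorem filter_lt_add_one (f : Lamps) (k : ℤ) :
    f.filter (· < k + 1) = f.filter (· < k) + Finsupp.single k (f k) := by
  ext i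
  simp only [Finsupp.add_apply, Finsupp.filter_apply, Finsupp.single_apply]
  obtain h | rfl | h := lt_trichotomy i k
  · rw [if_pos (by omega), if_pos h, if_neg h.ne', add_zero]
  · rw [if_pos (by omega), if_neg (lt_irrefl i), if_pos rfl, zero_add]
  · rw [if_neg (by omega), if_neg h.not_gt, if_neg h.ne, add_zero]

theorem sweep_add_one (f : Lamps) (k : ℤ) :
    sweep f (k + 1) = sweep f k * Lamplighter.t ∨
      sweep f (k + 1) = sweep f k * Lamplighter.a * Lamplighter.t := by
  rw [sweep, sweep, Lamplighter.mk_mul_a, Lamplighter.mk_mul_t, Lamplighter.mk_mul_t,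
    filter_lt_add_one]
  obtain h | h : f k = 0 ∨ f k = 1 := by generalize f k = x; decide +revert
  · exact .inl (by rw [h, Finsupp.single_zero, add_zero])
  · exact .inr (by rw [h])

/-- The generators of the lamplighter group. -/
abbrev gens : Set Lamplighter := {Lamplighter.a, Lamplighter.t}

theorem a_mem_cayleyBall : Lamplighter.a ∈ cayleyBall gens 1 :=
  mem_cayleyBall_one (.inl (.inl rfl))

theorem t_mem_cayleyBall : Lamplighter.t ∈ cayleyBall gens 1 :=
  mem_cayleyBall_one (.inl (.inr rfl))

theorem sweep_add_mem_cayleyBall {f : Lamps} {k : ℤ} {n : ℕ} (h : sweep f k ∈ cayleyBall gens n)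
    (j : ℕ) : sweep f (k + j) ∈ cayleyBall gens (n + 2 * j) := by
  induction j with
  | zero => simpa using h
  | succ j ih =>
    rw [Nat.cast_succ, ← add_assoc]
    obtain hstep | hstep := sweep_add_one f (k + j) <;> rw [hstep]
    · exact cayleyBall_mono (by omega) (mul_mem_cayleyBall ih t_mem_cayleyBall)
    · exact mul_mem_cayleyBall (n := 1) (mul_mem_cayleyBall (n := 1) ih a_mem_cayleyBall)
        t_mem_cayleyBall

theorem mem_cayleyBall_of_support_subset {f : Lamps} {m : ℤ} {N : ℕ}
    (hf : ∀ i ∈ f.support, -N ≤ i ∧ i < N) (hm : |m| ≤ N) :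
    .mk f m ∈ cayleyBall gens (7 * N) := by
  have hstart : sweep f (-N) = Lamplighter.t ^ (-N : ℤ) := by
    rw [← one_mul (Lamplighter.t ^ _), ← show Lamplighter.mk 0 0 = 1 from rfl,
      Lamplighter.mk_mul_t_zpow, zero_add, sweep, (Finsupp.filter_eq_zero_iff _ _).2]
    exact fun i hi => Finsupp.notMem_support_iff.1 fun h => (hf i h).1.not_gt hi
  have hend : Lamplighter.mk f m = sweep f (-N + (2 * N : ℕ)) * Lamplighter.t ^ (m - N) := by
    rw [sweep, Lamplighter.mk_mul_t_zpow, (Finsupp.filter_eq_self_iff _ _).2]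
    · congr 1
      push_cast
      ring
    · intro i hi
      have := (hf i (Finsupp.mem_support_iff.2 hi)).2
      push_cast
      linarith
  have hsweep : sweep f (-N) ∈ cayleyBall gens N := by
    rw [hstart]
    simpa using zpow_mem_cayleyBall t_mem_cayleyBall (-N)
  rw [hend]
  refine cayleyBall_mono ?_ (mul_mem_cayleyBall (sweep_add_mem_cayleyBall hsweep (2 * N))
    (zpow_mem_cayleyBall t_mem_cayleyBall (m - N)))
  rw [abs_le] at hm
  omega

theorem value_mem_cayleyBall {c : Config (ZMod 2)} {N : ℕ} (hN : c.1.length + c.2.length < N) :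
    c.value ∈ cayleyBall gens (7 * N) := by
  refine mem_cayleyBall_of_support_subset (fun i hi => ?_) ?_
  · rw [lamps, Finsupp.domCongr_apply, Finsupp.mem_support_iff, Finsupp.equivMapDomain_apply,
      List.toFinsupp_apply] at hi
    have hlt : cell.symm i < (c.1 ++ c.2).length :=
      not_le.1 fun h => hi (List.getD_eq_default _ _ h)
    have habs := abs_cell_le (cell.symm i)
    rw [Equiv.apply_symm_apply, abs_le] at habs
    rw [List.length_append] at hlt
    omega
  · exact (abs_cell_le _).trans (by omega)

theorem cayleyDist_eval_encode_le (b : ZMod 2 → Alph gens) (s : Alph gens)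
    (c : Config (ZMod 2)) :
    cayleyDist gens (eval gens (encode b s c)) c.value ≤ 8 * (encode b s c).length := by
  have hvalue : c.value ∈ cayleyBall gens (7 * (encode b s c).length) := by
    rw [← value_trim]
    exact value_mem_cayleyBall ((length_cursorWord b s (c.1, trim c.2)).symm ▸ Nat.lt_succ_self _)
  exact (cayleyDist_eval_le hvalue).trans (by omega)

end LamplighterMetric

section Encoding

theorem isRegularRel_encode_flipMoves {α : Type*} (b : ZMod 2 → α) (s : α) :
    IsRegularRel (Prod.map (encode b s) (encode b s) '' flipMoves) :=
  isRegularRel_encode_moves b s isRegular_top (Set.finite_range _) (by rintro _ ⟨x, rfl⟩; rfl)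

theorem isRegularRel_encode_stepMoves {α : Type*} (b : ZMod 2 → α) (s : α) :
    IsRegularRel (Prod.map (encode b s) (encode b s) '' stepMoves) := by
  have length_eq {k : ℕ} (r) (hr : r ∈ advanceRules (ZMod 2) k) :
      r.1.1.length + r.1.2.length = r.2.1.length + r.2.2.length := by
    obtain ⟨l, -, rfl⟩ := hr
    exact zero_add _
  have length_eq_swap {k : ℕ} (r) (hr : r ∈ Prod.swap '' advanceRules (ZMod 2) k) :
      r.1.1.length + r.1.2.length = r.2.1.length + r.2.2.length := by
    obtain ⟨r, hr, rfl⟩ := hr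
    exact (length_eq r hr).symm
  rw [stepMoves, Set.image_union, Set.image_union]
  exact (isRegularRel_encode_moves b s isRegular_lengthLanguage_even
      (finite_advanceRules 2) length_eq).union
    ((isRegularRel_encode_moves b s isRegular_lengthLanguage_odd
      ((finite_advanceRules 2).image _) length_eq_swap).union
    (isRegularRel_encode_moves b s (isRegular_of_finite (Set.finite_singleton []))
      ((finite_advanceRules 1).image _) length_eq_swap))

/-- The letter for a lamp: `t` if it is unlit, `a` if it is lit. -/
noncomputable def lampLetter (x : ZMod 2) : Alph gens :=
  ⟨if x = 0 then Lamplighter.t else Lamplighter.a, by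
    split_ifs
    exacts [.inl (.inr rfl), .inl (.inl rfl)]⟩

/-- The letter for the cursor. -/
noncomputable def cursorLetter : Alph gens :=
  ⟨Lamplighter.t⁻¹, .inr (Set.inv_mem_inv.2 (.inr rfl))⟩

theorem position_lampLetter (x : ZMod 2) : (lampLetter x).1.2 = if x = 0 then 1 else 0 :=
  apply_ite (fun g : Lamplighter => g.2) (x = 0) Lamplighter.t Lamplighter.a

theorem lampLetter_injective : lampLetter.Injective := by
  have position_injective :
      Function.Injective fun x : ZMod 2 => if x = 0 then (1 : ℤ) else 0 := by decide
  intro x y hxy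
  refine position_injective ?_
  simp only [← position_lampLetter, hxy]

theorem cursorLetter_notMem_range_lampLetter : cursorLetter ∉ Set.range lampLetter := by
  rintro ⟨x, hx⟩
  have hposition := position_lampLetter x
  rw [hx] at hposition
  replace hposition : -1 = if x = 0 then (1 : ℤ) else 0 := hposition
  split_ifs at hposition

theorem encode_letters_eq_iff {c c' : Config (ZMod 2)} :
    encode lampLetter cursorLetter c = encode lampLetter cursorLetter c' ↔ c.value = c'.value :=
  (encode_eq_encode_iff lampLetter_injective cursorLetter_notMem_range_lampLetter).trans
    value_eq_value_iff.symm

theorem isCayleyAutomaticRep_encode :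
    IsCayleyAutomaticRep gens (Set.range (encode lampLetter cursorLetter))
      (Function.extend (encode lampLetter cursorLetter) Config.value 1) := by
  have value_surjective : Config.value.Surjective := fun g =>
    (exists_value_eq g 0).imp fun _ => And.right
  refine isCayleyAutomaticRep_extend value_surjective (fun _ _ => encode_letters_eq_iff)
    (isRegular_range_encode _ _) ?_
  rintro _ (rfl | rfl)
  · exact ⟨_, realizesMul_flipMoves, isRegularRel_encode_flipMoves _ _⟩
  · exact ⟨_, realizesMul_stepMoves, isRegularRel_encode_stepMoves _ _⟩

end Encoding

end CAG

open CAG in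
/-- The lamplighter group `ℤ₂ ≀ ℤ` belongs to the class `ℬ_𝔦`, where `𝔦(n) = n` is the
identity function. -/
theorem lamplighter_mem_classB_ident :
    InB ({Lamplighter.a, Lamplighter.t} : Set Lamplighter) identF := by
  refine inB_identF_of_cayleyDist_le (K := 8) isCayleyAutomaticRep_encode (by decide) ?_
  rintro _ ⟨c, rfl⟩
  have hextend : Function.extend (encode lampLetter cursorLetter) Config.value 1
      (encode lampLetter cursorLetter c) = c.value :=
    Function.FactorsThrough.extend_apply (fun _ _ => encode_letters_eq_iff.1) 1 c
  rw [hextend]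
  exact cayleyDist_eval_encode_le lampLetter cursorLetter c
end
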